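/- arXiv:1409.3922 — 2 statements merged into one kernel-verified Lean document; each statement's English description precedes it below -/
import Mathlib

section
/- Let (X,μ) and (Y,λ) be Cantor measure spaces with μ(X) < λ(Y) and λ strictly positive. Let G_X ⊆ X and G_Y ⊆ Y be G_δ-sets with μ(G_X) = λ(G_Y) = 0 and G_Y dense in Y. Then there exists a measure-preserving topological embedding f : X → Y with f(G_X) ⊆ G_Y. -/
open MeasureTheory Set

/-!
Write `GXᶜ = ⋃ n, K n` and `GYᶜ = ⋃ n, F n` with `K`, `F` increasing sequences of closed sets and
`K 0 = F 0 = ∅`. Since `GX` is null, `μ (K n)ᶜ → 0`; since `GY` is dense, every `F n` has empty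
interior, so `lam (U \ F n) > 0` for every nonempty open `U` by strict positivity.

The embedding is the limit of a dyadic tree of *cells* `(A, B, m)`: a clopen `A ⊆ X` which is going
to be mapped into a clopen `B ⊆ Y`, together with a nondecreasing `m : ℕ → ℕ`, `m 0 = 0`. The
invariant of a nonempty cell at level `k` is *domination*: `μ (A \ K (m n)) < lam (B \ F n)` for
all `n ≤ k` (`Dom`). For `n = 0` it says `μ A < lam B`. For larger `n` it says that there is enough
room in `B` outside `F n` for the part of `A` outside `K (m n)`, which is where points of `GX` may
still need to avoid `F n`. The second invariant is *avoidance*: if `A` misses `K (m n)` for some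
`n ≤ k`, then `B` misses `F n`.

Domination survives cutting `A` by any clopen subset of `X` (`Dom.split_src`) and cutting `B` by
any clopen subset of `Y` (`Dom.split_tgt`), once the other side is cut suitably. By atomlessness
there is a measurable set with prescribed traces on finitely many nested sets
(`exists_inter_measureReal_eq`), and because all the inequalities are strict it may be replaced by a
clopen set (`exists_isClopen_lower`, `exists_isClopen_upper`). After a cut, level `k + 1` is added
by choosing `m (k + 1)` so large that `K (m (k + 1))ᶜ` has tiny measure (`Dom.new_level`), `B` is
shrunk to restore avoidance (`Dom.avoid`), and shrunk again to halve the excess `lam B - μ A`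
(`Dom.shrink`).

Running through all clopen sets of `X` and of `Y`, the tree determines a continuous injective
`f : X → Y`. Domination at `n = 0` gives `μ (f ⁻¹' D) ≤ lam D` for `D` clopen, hence for `D` Borel,
and the vanishing excess gives `lam (range f) ≤ μ X`; together these force `lam (f '' B) = μ B`. If
`x ∈ GX`, the index `M = m n` attached to `x` is fixed from level `n` on, and `x ∉ K M` implies that
some cell around `x` misses `K M`, so `f x ∉ F n` by avoidance.
-/

/-! ### Sets with prescribed measure in an atomless space -/

open Filter Topology in
/-- A finite atomless measure attains every value between `0` and `ν E` on subsets of `E`. -/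
theorem exists_subset_measureReal_eq {Z : Type*} [MeasurableSpace Z] [StandardBorelSpace Z]
    (ν : Measure Z) [IsFiniteMeasure ν] (hν : ∀ z, ν {z} = 0) {E : Set Z} (hE : MeasurableSet E)
    {t : ℝ} (h0 : 0 ≤ t) (h1 : t ≤ ν.real E) :
    ∃ S ⊆ E, MeasurableSet S ∧ ν.real S = t := by
  rcases h0.eq_or_lt with rfl | h0
  · exact ⟨∅, empty_subset _, .empty, by simp⟩
  rcases h1.eq_or_lt with rfl | h1
  · exact ⟨E, Subset.rfl, hE, rfl⟩
  -- Push the measure forward to `ℝ`; its distribution function is continuous because there are no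
  -- atoms, so the intermediate value theorem applies.
  have hg := measurableEmbedding_embeddingReal Z
  set g := embeddingReal Z
  set ρ := (ν.restrict E).map g with hρ
  have hval : ∀ b, ρ.real (Iic b) = ν.real (g ⁻¹' Iic b ∩ E) := fun b => by
    rw [hρ, map_measureReal_apply hg.measurable measurableSet_Iic,
      measureReal_restrict_apply (hg.measurable measurableSet_Iic)]
  have : NullSingletonClass ρ := ⟨fun x => by
    rw [hρ, Measure.map_apply hg.measurable (measurableSet_singleton x)]
    have hs : (g ⁻¹' {x}).Subsingleton := fun a ha b hb => hg.injective (ha.trans hb.symm)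
    refine le_antisymm ((Measure.restrict_apply_le _ _).trans ?_) bot_le
    rcases hs.eq_empty_or_singleton with h | ⟨z, h⟩ <;> simp [h, hν]⟩
  have hcont : Continuous fun b => ρ.real (Iic b) := by
    have h := (intervalIntegral.continuous_primitive (μ := ρ) (f := fun _ => (1 : ℝ))
      (fun a b => intervalIntegrable_const) 0).add_const (ρ.real (Iic 0))
    convert h using 2 with b
    rw [← intervalIntegral.integral_Iic_sub_Iic (by simp) (by simp)]
    simp
  have hbot : Tendsto (fun b => ρ.real (Iic b)) atBot (𝓝 0) := by
    have h := tendsto_measure_iInter_atBot (μ := ρ) (s := fun b : ℝ => Iic b)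
      (fun _ => measurableSet_Iic.nullMeasurableSet) (fun _ _ h => Iic_subset_Iic.2 h)
      ⟨0, measure_ne_top _ _⟩
    rw [iInter_Iic_eq_empty_iff.2 (by simp), measure_empty] at h
    exact (ENNReal.tendsto_toReal ENNReal.zero_ne_top).comp h
  have htop : Tendsto (fun b => ρ.real (Iic b)) atTop (𝓝 (ν.real E)) := by
    have := (ENNReal.tendsto_toReal (measure_ne_top ρ univ)).comp (tendsto_measure_Iic_atTop ρ)
    have h2 : (ρ univ).toReal = ν.real E := by
      rw [hρ, Measure.map_apply hg.measurable .univ]; simp [Measure.real]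
    rw [h2] at this
    exact this
  obtain ⟨b, hb⟩ := mem_range_of_exists_le_of_exists_ge hcont
    ((hbot.eventually_le_const h0).exists) ((htop.eventually_const_le h1).exists)
  exact ⟨_, inter_subset_right, (hg.measurable measurableSet_Iic).inter hE, (hval b).symm.trans hb⟩

/-- For nested measurable sets `D 0 ⊇ D 1 ⊇ ⋯` and numbers `s n`, there is a measurable `S` with
`ν (S ∩ D n) = s n` for `n ≤ k`, provided the numbers are compatible: the part of `S` in
`D n \ D (n + 1)` must have measure `s n - s (n + 1)`, which has to lie between `0` and the measure
of `D n \ D (n + 1)`. -/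
theorem exists_inter_measureReal_eq {Z : Type*} [MeasurableSpace Z] [StandardBorelSpace Z]
    (ν : Measure Z) [IsFiniteMeasure ν] (hν : ∀ z, ν {z} = 0) (k : ℕ) :
    ∀ (D : ℕ → Set Z) (s : ℕ → ℝ), (∀ n, MeasurableSet (D n)) → Antitone D →
    (∀ n < k, s (n + 1) ≤ s n ∧ s n - s (n + 1) ≤ ν.real (D n) - ν.real (D (n + 1))) →
    0 ≤ s k → s k ≤ ν.real (D k) →
    ∃ S ⊆ D 0, MeasurableSet S ∧ ∀ n ≤ k, ν.real (S ∩ D n) = s n := by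
  induction k with
  | zero =>
    intro D s hD _ _ h0 h1
    obtain ⟨S, hS, hSm, hSe⟩ := exists_subset_measureReal_eq ν hν (hD 0) h0 h1
    refine ⟨S, hS, hSm, fun n hn => ?_⟩
    obtain rfl : n = 0 := by omega
    rwa [inter_eq_left.2 hS]
  | succ k ih =>
    intro D s hD hanti hs h0 h1
    obtain ⟨S, hS, hSm, hSe⟩ := ih (fun n => D (n + 1)) (fun n => s (n + 1)) (fun n => hD _)
      (fun a b hab => hanti (by omega)) (fun n hn => hs (n + 1) (by omega)) h0 h1
    have h01 : D 1 ⊆ D 0 := hanti (by omega)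
    obtain ⟨h2, h3⟩ := hs 0 (by omega)
    obtain ⟨T, hT, hTm, hTe⟩ := exists_subset_measureReal_eq ν hν ((hD 0).diff (hD 1))
      (t := s 0 - s 1) (by simpa using h2)
      (by rw [measureReal_sdiff h01 (hD 1)]; simpa using h3)
    have hTD : ∀ n, T ∩ D (n + 1) = ∅ := fun n => by
      have := hanti (show 1 ≤ n + 1 by omega)
      ext z; constructor
      · rintro ⟨a, b⟩; exact ((hT a).2 (this b)).elim
      · simp
    refine ⟨S ∪ T, union_subset (hS.trans h01) (hT.trans sdiff_subset), hSm.union hTm, ?_⟩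
    rintro (_ | n) hn
    · rw [inter_eq_left.2 (union_subset (hS.trans h01) (hT.trans sdiff_subset)),
        measureReal_union _ hTm, hTe]
      · have := hSe 0 (by omega)
        rw [inter_eq_left.2 (by simpa using hS)] at this
        simp at this; linarith
      · exact disjoint_left.2 fun z h h' => (hT h').2 (hS h)
    · rw [union_inter_distrib_right, hTD, union_empty]
      exact hSe n (by omega)

theorem exists_mid {p q u v : ℝ} (h1 : p ≤ q) (h2 : p < v) (h3 : u < q) (h4 : u < v) :
    ∃ x, p ≤ x ∧ x ≤ q ∧ u < x ∧ x < v := by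
  have h5 : u < min q v := lt_min h3 h4
  obtain ⟨w, hw1, hw2⟩ := exists_between h5
  exact ⟨max p w, le_max_left _ _, max_le h1 (hw2.le.trans (min_le_left _ _)),
    lt_max_of_lt_right hw1, max_lt h2 (hw2.trans_le (min_le_right _ _))⟩

/-- The `s n` are the measures of the traces on nested sets `D n` (with `d n = ν (D n)`) of a set
whose traces are to be larger than `a n` and whose complement is to have traces larger than `b n`.
They are chosen from the outermost set inwards. -/
theorem numeric_lower {a b d : ℕ → ℝ} (ha : Antitone a) (hb : Antitone b) (hd : Antitone d)
    (k : ℕ) (h : ∀ n ≤ k, a n + b n < d n) :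
    ∃ s : ℕ → ℝ, (∀ n < k, s (n + 1) ≤ s n ∧ s n - s (n + 1) ≤ d n - d (n + 1)) ∧
      ∀ n ≤ k, a n < s n ∧ b n < d n - s n := by
  induction k with
  | zero =>
    obtain ⟨x, hx1, hx2⟩ := exists_between (show a 0 < d 0 - b 0 by linarith [h 0 le_rfl])
    refine ⟨fun _ => x, by simp, fun n hn => ?_⟩
    obtain rfl : n = 0 := by omega
    constructor <;> simp only <;> linarith
  | succ k ih =>
    obtain ⟨s, hs1, hs2⟩ := ih fun n hn => h n (by omega)
    obtain ⟨h1, h2⟩ := hs2 k le_rfl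
    have h3 := ha (Nat.le_succ k)
    have h4 := hb (Nat.le_succ k)
    have h5 := hd (Nat.le_succ k)
    have h6 := h (k + 1) le_rfl
    simp only [Nat.succ_eq_add_one] at h3 h4 h5
    obtain ⟨x, hx1, hx2, hx3, hx4⟩ := exists_mid (p := s k - (d k - d (k + 1))) (q := s k)
      (u := a (k + 1)) (v := d (k + 1) - b (k + 1)) (by linarith) (by linarith) (by linarith)
      (by linarith)
    refine ⟨Function.update s (k + 1) x, fun n hn => ?_, fun n hn => ?_⟩
    · rcases Nat.lt_succ_iff_lt_or_eq.1 hn with hn | rfl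
      · rw [Function.update_of_ne (by omega), Function.update_of_ne (by omega)]
        exact hs1 n hn
      · rw [Function.update_self, Function.update_of_ne (by omega)]
        constructor <;> linarith
    · rcases Nat.le_succ_iff.1 hn with hn | rfl
      · rw [Function.update_of_ne (by omega)]
        exact hs2 n hn
      · rw [Function.update_self]
        constructor <;> linarith

/-- Counterpart of `numeric_lower` with upper bounds: the traces are to be smaller than `a n` and
those of the complement smaller than `b n`. Here the `s n` are chosen from the innermost set
outwards. -/
theorem numeric_upper (k : ℕ) : ∀ {a b d : ℕ → ℝ}, Antitone a → Antitone b → Antitone d →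
    (∀ n, 0 ≤ d n) →
    (∀ n ≤ k, 0 < a n ∧ 0 < b n ∧ d n < a n + b n) →
    ∃ s : ℕ → ℝ, (∀ n < k, s (n + 1) ≤ s n ∧ s n - s (n + 1) ≤ d n - d (n + 1)) ∧
      0 ≤ s k ∧ s k ≤ d k ∧ ∀ n ≤ k, s n < a n ∧ d n - s n < b n := by
  induction k with
  | zero =>
    intro a b d ha hb hd hd0 h
    obtain ⟨h1, h2, h3⟩ := h 0 le_rfl
    obtain ⟨x, hx1, hx2, hx3, hx4⟩ := exists_mid (hd0 0) h1 (u := d 0 - b 0) (by linarith)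
      (by linarith)
    refine ⟨fun _ => x, by simp, hx1, hx2, fun n hn => ?_⟩
    obtain rfl : n = 0 := by omega
    constructor <;> simp only <;> linarith
  | succ k ih =>
    intro a b d ha hb hd hd0 h
    obtain ⟨s, hs1, hs2, hs3, hs4⟩ := ih (a := fun n => a (n + 1)) (b := fun n => b (n + 1))
      (d := fun n => d (n + 1)) (fun _ _ hm => ha (by omega)) (fun _ _ hm => hb (by omega))
      (fun _ _ hm => hd (by omega)) (fun n => hd0 _) fun n hn => h (n + 1) (by omega)
    obtain ⟨h1, h2⟩ := hs4 0 (by omega)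
    have h3 := ha (Nat.le_succ 0)
    have h4 := hb (Nat.le_succ 0)
    have h5 := hd (Nat.le_succ 0)
    obtain ⟨-, -, h6⟩ := h 0 (by omega)
    simp only [Nat.succ_eq_add_one] at h3 h4 h5 h1 h2
    obtain ⟨x, hx1, hx2, hx3, hx4⟩ := exists_mid (p := s 0) (q := s 0 + (d 0 - d (0 + 1)))
      (u := d 0 - b 0) (v := a 0) (by linarith) (by linarith) (by linarith)
      (by linarith)
    -- The induction hypothesis was applied to the shifted sequences: prepend `x`.
    refine ⟨fun n => Nat.casesOn n x s, ?_, hs2, hs3, ?_⟩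
    · rintro (_ | n) hn
      · exact ⟨hx1, show x - s 0 ≤ _ by linarith⟩
      · exact hs1 n (by omega)
    · rintro (_ | n) hn
      · exact ⟨hx4, show d 0 - x < _ by linarith⟩
      · exact hs4 n (by omega)

theorem exists_pos_forall_lt (k : ℕ) (g : ℕ → ℝ) (hg : ∀ n ≤ k, 0 < g n) :
    ∃ ε > 0, ∀ n ≤ k, ε < g n := by
  induction k with
  | zero => exact ⟨g 0 / 2, half_pos (hg 0 le_rfl), fun n hn => by
      obtain rfl : n = 0 := by omega
      exact half_lt_self (hg 0 le_rfl)⟩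
  | succ k ih =>
    obtain ⟨ε, hε, h⟩ := ih fun n hn => hg n (by omega)
    have h1 := hg (k + 1) le_rfl
    refine ⟨min ε (g (k + 1) / 2), lt_min hε (half_pos h1), fun n hn => ?_⟩
    rcases Nat.le_succ_iff.1 hn with hn | rfl
    · exact (min_le_left _ _).trans_lt (h n hn)
    · exact (min_le_right _ _).trans_lt (half_lt_self h1)

/-! ### Approximation by clopen sets -/

section Clopen

variable {Z : Type*} [TopologicalSpace Z] [CompactSpace Z] [T2Space Z]
  [TopologicalSpace.MetrizableSpace Z] [TotallyDisconnectedSpace Z]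
  [MeasurableSpace Z] [BorelSpace Z] (ν : Measure Z) [IsFiniteMeasure ν]

/-- The clopen sets form an algebra generating the Borel σ-algebra, so they are dense for the
measure of the symmetric difference. -/
theorem exists_isClopen_symmDiff_lt {S : Set Z} (hS : MeasurableSet S) {ε : ℝ} (hε : 0 < ε) :
    ∃ T, IsClopen T ∧ ν.real (symmDiff S T) < ε := by
  have halg : IsSetAlgebra {s : Set Z | IsClopen s} :=
    ⟨isClopen_empty, fun _ h => IsClopen.compl h, fun _ _ h h' => IsClopen.union h h'⟩
  have hgen : ‹MeasurableSpace Z› = MeasurableSpace.generateFrom {s : Set Z | IsClopen s} := by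
    rw [BorelSpace.measurable_eq (α := Z)]
    exact isTopologicalBasis_isClopen.borel_eq_generateFrom
  obtain ⟨T, hT, h⟩ := (Measure.MeasureDense.of_generateFrom_isSetAlgebra_finite ν halg hgen).approx
    S hS (measure_ne_top _ _) ε hε
  exact ⟨T, hT, (ENNReal.lt_ofReal_iff_toReal_lt (measure_ne_top _ _)).1 h⟩

theorem exists_isClopen_subset_of_isOpen {U : Set Z} (hU : IsOpen U) {ε : ℝ} (hε : 0 < ε) :
    ∃ T ⊆ U, IsClopen T ∧ ν.real (U \ T) < ε := by
  obtain ⟨K, hKU, hK, h⟩ := hU.measurableSet.exists_isCompact_sdiff_lt (μ := ν)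
    (measure_ne_top _ _) (ENNReal.ofReal_pos.2 hε).ne'
  obtain ⟨T, hT, hKT, hTU⟩ := exists_clopen_of_closed_subset_open hK.isClosed hU hKU
  refine ⟨T, hTU, hT, ?_⟩
  exact (ENNReal.lt_ofReal_iff_toReal_lt (measure_ne_top _ _)).1
    ((measure_mono (sdiff_subset_sdiff_right hKT)).trans_lt h)

/-- Clopen version of `exists_inter_measureReal_eq`, up to an error `ε`. -/
theorem exists_isClopen_inter_approx (hν : ∀ z, ν {z} = 0) (k : ℕ) {D : ℕ → Set Z} {s : ℕ → ℝ}
    (hD : ∀ n, MeasurableSet (D n)) (hanti : Antitone D)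
    (hs : ∀ n < k, s (n + 1) ≤ s n ∧ s n - s (n + 1) ≤ ν.real (D n) - ν.real (D (n + 1)))
    (h0 : 0 ≤ s k) (h1 : s k ≤ ν.real (D k)) {ε : ℝ} (hε : 0 < ε) :
    ∃ T, IsClopen T ∧ ∀ n ≤ k, |ν.real (T ∩ D n) - s n| < ε := by
  let := TopologicalSpace.metrizableSpaceMetric Z
  have : PolishSpace Z := inferInstance
  obtain ⟨S, -, hS, hSe⟩ := exists_inter_measureReal_eq ν hν k D s hD hanti hs h0 h1
  obtain ⟨T, hT, hST⟩ := exists_isClopen_symmDiff_lt ν hS hε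
  refine ⟨T, hT, fun n hn => ?_⟩
  rw [← hSe n hn]
  have e1 : ν.real (T ∩ D n) ≤ ν.real (S ∩ D n) + ν.real (symmDiff S T) :=
    (measureReal_mono (by
      rintro z ⟨hz, hz'⟩
      by_cases h : z ∈ S
      · exact Or.inl ⟨h, hz'⟩
      · exact Or.inr (Or.inr ⟨hz, h⟩))).trans (measureReal_union_le _ _)
  have e2 : ν.real (S ∩ D n) ≤ ν.real (T ∩ D n) + ν.real (symmDiff S T) :=
    (measureReal_mono (by
      rintro z ⟨hz, hz'⟩
      by_cases h : z ∈ T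
      · exact Or.inl ⟨h, hz'⟩
      · exact Or.inr (Or.inl ⟨hz, h⟩))).trans (measureReal_union_le _ _)
  rw [abs_lt]; constructor <;> linarith

/-- If `a n + b n < ν (D n)` on nested sets, some clopen `T` leaves simultaneously more than `a n` of
`D n` inside `T` and more than `b n` of it outside. -/
theorem exists_isClopen_lower (hν : ∀ z, ν {z} = 0) (k : ℕ) {D : ℕ → Set Z} {a b : ℕ → ℝ}
    (hD : ∀ n, MeasurableSet (D n)) (hanti : Antitone D) (ha : Antitone a) (hb : Antitone b)
    (ha0 : ∀ n, 0 ≤ a n) (hb0 : ∀ n, 0 ≤ b n) (h : ∀ n ≤ k, a n + b n < ν.real (D n)) :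
    ∃ T, IsClopen T ∧ ∀ n ≤ k, a n < ν.real (D n ∩ T) ∧ b n < ν.real (D n \ T) := by
  obtain ⟨s, hs, hs'⟩ := numeric_lower ha hb (d := fun n => ν.real (D n))
    (fun _ _ hm => measureReal_mono (hanti hm)) k h
  obtain ⟨h1, h2⟩ := hs' k le_rfl
  obtain ⟨ε, hε, hε'⟩ := exists_pos_forall_lt k
    (fun n => min (s n - a n) (ν.real (D n) - s n - b n))
    fun n hn => lt_min (by linarith [hs' n hn]) (by linarith [hs' n hn])
  obtain ⟨T, hT, hTs⟩ := exists_isClopen_inter_approx ν hν k hD hanti hs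
    (by linarith [ha0 k]) (by linarith [hb0 k]) hε
  refine ⟨T, hT, fun n hn => ?_⟩
  obtain ⟨e1, e2⟩ := lt_min_iff.1 (hε' n hn)
  obtain ⟨e3, e4⟩ := abs_lt.1 (hTs n hn)
  have e5 := measureReal_inter_add_sdiff (μ := ν) (s := D n) hT.isOpen.measurableSet
  rw [inter_comm] at e3 e4
  constructor <;> linarith

/-- If `ν (D n) < a n + b n` on nested sets, with `a n` and `b n` positive, some clopen `T` leaves
simultaneously less than `a n` of `D n` inside `T` and less than `b n` of it outside. -/
theorem exists_isClopen_upper (hν : ∀ z, ν {z} = 0) (k : ℕ) {D : ℕ → Set Z} {a b : ℕ → ℝ}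
    (hD : ∀ n, MeasurableSet (D n)) (hanti : Antitone D) (ha : Antitone a) (hb : Antitone b)
    (h : ∀ n ≤ k, 0 < a n ∧ 0 < b n ∧ ν.real (D n) < a n + b n) :
    ∃ T, IsClopen T ∧ ∀ n ≤ k, ν.real (D n ∩ T) < a n ∧ ν.real (D n \ T) < b n := by
  obtain ⟨s, hs, hs0, hs1, hs'⟩ := numeric_upper k ha hb (d := fun n => ν.real (D n))
    (fun _ _ hm => measureReal_mono (hanti hm)) (fun _ => measureReal_nonneg) h
  obtain ⟨ε, hε, hε'⟩ := exists_pos_forall_lt k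
    (fun n => min (a n - s n) (b n - (ν.real (D n) - s n)))
    fun n hn => lt_min (by linarith [hs' n hn]) (by linarith [hs' n hn])
  obtain ⟨T, hT, hTs⟩ := exists_isClopen_inter_approx ν hν k hD hanti hs hs0 hs1 hε
  refine ⟨T, hT, fun n hn => ?_⟩
  obtain ⟨e1, e2⟩ := lt_min_iff.1 (hε' n hn)
  obtain ⟨e3, e4⟩ := abs_lt.1 (hTs n hn)
  have e5 := measureReal_inter_add_sdiff (μ := ν) (s := D n) hT.isOpen.measurableSet
  rw [inter_comm] at e3 e4
  constructor <;> linarith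

end Clopen

/-! ### Domination -/

/-- The data extracted from the two `Gδ` sets: the closed sets `K n` exhaust `X` up to measure
zero (their complements decrease to `GX`), and the closed sets `F n` do not have full measure in any
nonempty open set (the complements `(F n)ᶜ` decrease to `GY`). The values `K 0 = F 0 = ∅` make
level `0` of `Dom` a comparison of total measures. -/
structure Setting {X Y : Type*} [TopologicalSpace X] [MeasurableSpace X] [TopologicalSpace Y]
    [MeasurableSpace Y] (μ : Measure X) (lam : Measure Y) (K : ℕ → Set X) (F : ℕ → Set Y) :
    Prop where
  atomlessX : ∀ x, μ {x} = 0
  atomlessY : ∀ y, lam {y} = 0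
  K_closed : ∀ n, IsClosed (K n)
  K_mono : Monotone K
  K_zero : K 0 = ∅
  K_exhaust : ∀ ε > 0, ∃ M, μ.real (K M)ᶜ < ε
  F_closed : ∀ n, IsClosed (F n)
  F_mono : Monotone F
  F_zero : F 0 = ∅
  F_small : ∀ n, ∀ U, IsOpen U → U.Nonempty → 0 < lam.real (U \ F n)

/-- Domination of `A` by `B` up to level `k`: for every `n ≤ k`, the part of `B` outside `F n` is
strictly larger than the part of `A` outside `K (m n)`. -/
def Dom {X Y : Type*} [MeasurableSpace X] [MeasurableSpace Y]
    (μ : Measure X) (lam : Measure Y) (K : ℕ → Set X) (F : ℕ → Set Y)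
    (k : ℕ) (A : Set X) (B : Set Y) (m : ℕ → ℕ) : Prop :=
  ∀ n ≤ k, μ.real (A \ K (m n)) < lam.real (B \ F n)

theorem Dom.nonempty {X Y : Type*} [MeasurableSpace X] [MeasurableSpace Y] {μ : Measure X}
    {lam : Measure Y} {K : ℕ → Set X} {F : ℕ → Set Y} {k : ℕ} {A : Set X} {B : Set Y} {m : ℕ → ℕ}
    (h : Dom μ lam K F k A B m) : B.Nonempty := by
  by_contra hB
  rw [not_nonempty_iff_eq_empty] at hB
  have := h 0 (Nat.zero_le _)
  rw [hB] at this
  simp at this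
  exact absurd this (not_lt.2 measureReal_nonneg)

section Step

set_option linter.unusedSectionVars false

variable {X Y : Type*}
  [TopologicalSpace X] [CompactSpace X] [T2Space X]
  [TopologicalSpace.MetrizableSpace X] [TotallyDisconnectedSpace X]
  [MeasurableSpace X] [BorelSpace X]
  [TopologicalSpace Y] [CompactSpace Y] [T2Space Y]
  [TopologicalSpace.MetrizableSpace Y] [TotallyDisconnectedSpace Y]
  [MeasurableSpace Y] [BorelSpace Y]
  {μ : Measure X} [IsFiniteMeasure μ] {lam : Measure Y} [IsFiniteMeasure lam]
  {K : ℕ → Set X} {F : ℕ → Set Y} {k : ℕ} {A : Set X} {B : Set Y} {m : ℕ → ℕ}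

/-- The index `m (k + 1)` is chosen so large that `(K (m (k + 1)))ᶜ` has smaller measure than
`B \ F (k + 1)`; earlier indices are unchanged. -/
theorem Dom.new_level (S : Setting μ lam K F) (h : Dom μ lam K F k A B m) (hm : Monotone m)
    (hB : IsClopen B) :
    ∃ m', Monotone m' ∧ (∀ n ≤ k, m' n = m n) ∧ Dom μ lam K F (k + 1) A B m' := by
  obtain ⟨M, hM⟩ := S.K_exhaust _ (S.F_small (k + 1) B hB.isOpen h.nonempty)
  -- The maximum with `m k` keeps the indices monotone.
  refine ⟨fun n => if n ≤ k then m n else max M (m k), fun i j hij => ?_, fun n hn => if_pos hn,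
    fun n hn => ?_⟩
  · dsimp only
    split_ifs with h1 h2 h2
    · exact hm hij
    · exact (hm h1).trans (le_max_right _ _)
    · omega
    · exact le_rfl
  · rcases Nat.le_succ_iff.1 hn with hn | rfl
    · simpa [hn] using h n hn
    · simp only [show ¬ (k + 1 ≤ k) by omega, if_false]
      refine (measureReal_mono ?_).trans_lt hM
      exact fun x hx hx' => hx.2 (S.K_mono (le_max_left _ _) hx')

/-- `B` can be shrunk so that it misses `F n` whenever `A` misses `K (m n)`. Let `N` be the largest
such `n`, and approximate the open set `B \ F N` from inside by a clopen set. For `n ≤ N` domination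
follows from the case `n = N`, where the left side is all of `μ A`. -/
theorem Dom.avoid (S : Setting μ lam K F) (h : Dom μ lam K F k A B m)
    (hm0 : m 0 = 0) (hB : IsClopen B) :
    ∃ B' ⊆ B, IsClopen B' ∧ Dom μ lam K F k A B' m ∧
      ∀ n ≤ k, Disjoint A (K (m n)) → Disjoint B' (F n) := by
  classical
  set N := Nat.findGreatest (fun n => Disjoint A (K (m n))) k with hN
  have hN1 : Disjoint A (K (m N)) := by
    refine Nat.findGreatest_spec (P := fun n => Disjoint A (K (m n))) (Nat.zero_le k) ?_
    simp [hm0, S.K_zero]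
  have hN2 : ∀ n ≤ k, Disjoint A (K (m n)) → n ≤ N := fun n hn h => Nat.le_findGreatest hn h
  have hNk : N ≤ k := Nat.findGreatest_le k
  obtain ⟨ε, hε, hε'⟩ := exists_pos_forall_lt k
    (fun n => lam.real (B \ F n) - μ.real (A \ K (m n))) fun n hn => sub_pos.2 (h n hn)
  obtain ⟨T, hTU, hT, hTε⟩ := exists_isClopen_subset_of_isOpen lam
    (hB.isOpen.sdiff (S.F_closed N)) hε
  refine ⟨T, hTU.trans sdiff_subset, hT, fun n hn => ?_, fun n hn hd => ?_⟩
  · have key : ∀ j ≤ k, N ≤ j → μ.real (A \ K (m j)) < lam.real (T \ F j) := fun j hj hNj => by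
      have h1 : lam.real (B \ F j) ≤ lam.real (T \ F j) + lam.real ((B \ F N) \ T) :=
        (measureReal_mono (by
          rintro y ⟨hy, hy'⟩
          by_cases hyT : y ∈ T
          · exact Or.inl ⟨hyT, hy'⟩
          · exact Or.inr ⟨⟨hy, fun h => hy' (S.F_mono hNj h)⟩, hyT⟩)).trans
          (measureReal_union_le _ _)
      linarith [hε' j hj]
    rcases le_total N n with hle | hle
    · exact key n hn hle
    · have h1 := key N hNk le_rfl
      rw [hN1.sdiff_eq_left] at h1
      exact (measureReal_mono sdiff_subset).trans_lt
        (h1.trans_le (measureReal_mono (sdiff_subset_sdiff_right (S.F_mono hle))))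
  · exact disjoint_left.2 fun y hy hy' => (hTU hy).2 (S.F_mono (hN2 n hn hd) hy')

/-- `B` can be shrunk so as to halve the excess `lam B - μ A`: the bound `b 0` reserves half of the
excess for the removed part. -/
theorem Dom.shrink (S : Setting μ lam K F) (h : Dom μ lam K F k A B m) (hm : Monotone m)
    (hm0 : m 0 = 0) (hB : IsClopen B) :
    ∃ B' ⊆ B, IsClopen B' ∧ Dom μ lam K F k A B' m ∧
      lam.real B' - μ.real A ≤ (lam.real B - μ.real A) / 2 := by
  have h0 : μ.real A < lam.real B := by
    simpa [hm0, S.K_zero, S.F_zero] using h 0 (Nat.zero_le _)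
  obtain ⟨T, hT, hT'⟩ := exists_isClopen_lower lam S.atomlessY k (D := fun n => B \ F n)
    (a := fun n => μ.real (A \ K (m n)))
    (b := fun n => if n = 0 then (lam.real B - μ.real A) / 2 else 0)
    (fun n => hB.isOpen.measurableSet.diff (S.F_closed n).measurableSet)
    (fun i j hij => sdiff_subset_sdiff_right (S.F_mono hij))
    (fun i j hij => measureReal_mono (sdiff_subset_sdiff_right (S.K_mono (hm hij))))
    (fun i j hij => by
      dsimp only
      split_ifs with h1 h2 h2
      · rfl
      · omega
      · linarith
      · rfl)
    (fun _ => measureReal_nonneg)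
    (fun n => by split_ifs <;> linarith)
    (fun n hn => by
      split_ifs with hn0
      · subst hn0
        simp only [hm0, S.K_zero, S.F_zero, sdiff_empty]
        linarith
      · simpa using h n hn)
  refine ⟨B ∩ T, inter_subset_left, hB.inter hT, fun n hn => ?_, ?_⟩
  · convert! (hT' n hn).1 using 2
    ext; simp; tauto
  · have h2 := (hT' 0 (Nat.zero_le _)).2
    simp only [S.F_zero, sdiff_empty, if_true] at h2
    have := measureReal_inter_add_sdiff (μ := lam) (s := B) hT.isOpen.measurableSet
    linarith

/-! ### Cells and their children -/

/-- A cell of the construction; the points of `src` are going to be mapped into `tgt`. -/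
structure Cell (X Y : Type*) where
  /-- A subset of the domain. -/
  src : Set X
  /-- The part of the codomain assigned to `src`. -/
  tgt : Set Y
  /-- The index `m` of `Dom`: the part of `src` outside `K (idx n)` is compared with the part of
  `tgt` outside `F n`. -/
  idx : ℕ → ℕ

/-- The invariants of a cell at level `k`. Domination is strict, so it cannot be demanded of a cell
with empty source; such a cell has empty target instead. -/
structure Good (μ : Measure X) (lam : Measure Y) (K : ℕ → Set X) (F : ℕ → Set Y)
    (k : ℕ) (P : Cell X Y) : Prop where
  src_clopen : IsClopen P.src
  tgt_clopen : IsClopen P.tgt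
  idx_mono : Monotone P.idx
  idx_zero : P.idx 0 = 0
  tgt_empty : P.src = ∅ → P.tgt = ∅
  dom : P.src.Nonempty → Dom μ lam K F k P.src P.tgt P.idx
  avoid : ∀ n ≤ k, Disjoint P.src (K (P.idx n)) → Disjoint P.tgt (F n)

/-- One step after a cut: pass from level `k` to level `k + 1`, restore avoidance and halve the
excess. -/
theorem exists_good_refinement (S : Setting μ lam K F) (hA : IsClopen A) (hB : IsClopen B)
    (hm : Monotone m) (hm0 : m 0 = 0) (h : A.Nonempty → Dom μ lam K F k A B m) :
    ∃ Q : Cell X Y, Good μ lam K F (k + 1) Q ∧ Q.src = A ∧ Q.tgt ⊆ B ∧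
      (∀ n ≤ k, Q.idx n = m n) ∧
      lam.real Q.tgt - μ.real Q.src ≤ (lam.real B - μ.real A) / 2 := by
  rcases A.eq_empty_or_nonempty with rfl | hne
  · refine ⟨⟨∅, ∅, m⟩, ⟨isClopen_empty, isClopen_empty, hm, hm0, fun _ => rfl, fun h => ?_,
      fun _ _ _ => empty_disjoint _⟩, rfl, empty_subset _, fun _ _ => rfl, ?_⟩
    · simp at h
    · have : 0 ≤ lam.real B := measureReal_nonneg
      simp only [measureReal_empty]
      linarith
  · obtain ⟨m', hm', hmm, h1⟩ := (h hne).new_level S hm hB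
    have hm0' : m' 0 = 0 := (hmm 0 (Nat.zero_le _)).trans hm0
    obtain ⟨B1, hB1, hB1c, h2, h2a⟩ := h1.avoid S hm0' hB
    obtain ⟨B2, hB2, hB2c, h3, h3s⟩ := h2.shrink S hm' hm0' hB1c
    refine ⟨⟨A, B2, m'⟩, ⟨hA, hB2c, hm', hm0', fun h => ?_, fun _ => h3, fun n hn hd => ?_⟩, rfl,
      hB2.trans hB1, hmm, ?_⟩
    · exact absurd h hne.ne_empty
    · exact (h2a n hn hd).mono_left hB2
    · have : lam.real B1 ≤ lam.real B := measureReal_mono hB1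
      dsimp only
      linarith

/-- Every clopen cut of `A` can be matched by a clopen cut of `B`. -/
theorem Dom.split_src (S : Setting μ lam K F) (h : Dom μ lam K F k A B m) (hm : Monotone m)
    (hB : IsClopen B) {c : Set X} (hc : IsClopen c) :
    ∃ T, IsClopen T ∧ Dom μ lam K F k (A ∩ c) (B ∩ T) m ∧ Dom μ lam K F k (A \ c) (B \ T) m := by
  obtain ⟨T, hT, hT'⟩ := exists_isClopen_lower lam S.atomlessY k (D := fun n => B \ F n)
    (a := fun n => μ.real ((A ∩ c) \ K (m n))) (b := fun n => μ.real ((A \ c) \ K (m n)))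
    (fun n => hB.isOpen.measurableSet.diff (S.F_closed n).measurableSet)
    (fun i j hij => sdiff_subset_sdiff_right (S.F_mono hij))
    (fun i j hij => measureReal_mono (sdiff_subset_sdiff_right (S.K_mono (hm hij))))
    (fun i j hij => measureReal_mono (sdiff_subset_sdiff_right (S.K_mono (hm hij))))
    (fun _ => measureReal_nonneg) (fun _ => measureReal_nonneg)
    (fun n hn => by
      refine lt_of_eq_of_lt ?_ (h n hn)
      rw [← measureReal_inter_add_sdiff (μ := μ) (s := A \ K (m n)) hc.isOpen.measurableSet]
      congr 2 <;> (ext; simp; tauto))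
  refine ⟨T, hT, fun n hn => ?_, fun n hn => ?_⟩
  · convert! (hT' n hn).1 using 2
    ext; simp; tauto
  · convert! (hT' n hn).2 using 2
    ext; simp; tauto

/-- Every clopen cut of `B` into two nonempty parts can be matched by a clopen cut of `A`.
Nonemptiness makes the available room `lam ((B ∩ d) \ F n)` and `lam ((B \ d) \ F n)` positive. -/
theorem Dom.split_tgt (S : Setting μ lam K F) (h : Dom μ lam K F k A B m) (hm : Monotone m)
    (hA : IsClopen A) (hB : IsClopen B) {d : Set Y} (hd : IsClopen d) (h1 : (B ∩ d).Nonempty)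
    (h2 : (B \ d).Nonempty) :
    ∃ T, IsClopen T ∧ Dom μ lam K F k (A ∩ T) (B ∩ d) m ∧ Dom μ lam K F k (A \ T) (B \ d) m := by
  obtain ⟨T, hT, hT'⟩ := exists_isClopen_upper μ S.atomlessX k (D := fun n => A \ K (m n))
    (a := fun n => lam.real ((B ∩ d) \ F n)) (b := fun n => lam.real ((B \ d) \ F n))
    (fun n => hA.isOpen.measurableSet.diff (S.K_closed _).measurableSet)
    (fun i j hij => sdiff_subset_sdiff_right (S.K_mono (hm hij)))
    (fun i j hij => measureReal_mono (sdiff_subset_sdiff_right (S.F_mono hij)))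
    (fun i j hij => measureReal_mono (sdiff_subset_sdiff_right (S.F_mono hij)))
    (fun n hn => by
      refine ⟨S.F_small n _ (hB.inter hd).isOpen h1, S.F_small n _ (hB.diff hd).isOpen h2,
        lt_of_lt_of_eq (h n hn) ?_⟩
      rw [← measureReal_inter_add_sdiff (μ := lam) (s := B \ F n) hd.isOpen.measurableSet]
      congr 2 <;> (ext; simp; tauto))
  refine ⟨T, hT, fun n hn => ?_, fun n hn => ?_⟩
  · convert! (hT' n hn).1 using 2
    ext; simp; tauto
  · convert! (hT' n hn).2 using 2
    ext; simp; tauto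

open TopologicalSpace in
/-- A good cell can be cut along a given clopen subset `e` of `X` or of `Y`. If `e` is a subset of
`Y` that does not properly cut the target, one of the two parts receives an empty source. -/
theorem Good.exists_split (S : Setting μ lam K F) {P : Cell X Y} (hP : Good μ lam K F k P)
    (e : Clopens X ⊕ Clopens Y) :
    ∃ (T : Set X) (R : Set Y), IsClopen T ∧ IsClopen R ∧
      ((P.src ∩ T).Nonempty → Dom μ lam K F k (P.src ∩ T) (P.tgt ∩ R) P.idx) ∧
      ((P.src \ T).Nonempty → Dom μ lam K F k (P.src \ T) (P.tgt \ R) P.idx) ∧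
      (∀ c, e = .inl c → T = c) ∧ (∀ d, e = .inr d → P.tgt.Nonempty → R = d) := by
  rcases P.src.eq_empty_or_nonempty with hs | hs
  · have ht := hP.tgt_empty hs
    rcases e with c | d
    · refine ⟨c, ∅, c.isClopen, isClopen_empty, ?_, ?_, ?_, ?_⟩ <;> simp [hs]
    · refine ⟨∅, d, isClopen_empty, d.isClopen, ?_, ?_, ?_, ?_⟩ <;> simp [hs]
  have hD := hP.dom hs
  rcases e with c | d
  · obtain ⟨T, hT, h1, h2⟩ := hD.split_src S hP.idx_mono hP.tgt_clopen c.isClopen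
    exact ⟨c, T, c.isClopen, hT, fun _ => h1, fun _ => h2, by simp, by simp⟩
  · rcases (P.tgt ∩ d).eq_empty_or_nonempty with h1 | h1
    · refine ⟨∅, d, isClopen_empty, d.isClopen, by simp, fun _ => ?_, by simp, by simp⟩
      rwa [sdiff_empty, sdiff_eq_left.2 (disjoint_iff_inter_eq_empty.2 h1)]
    rcases (P.tgt \ d).eq_empty_or_nonempty with h2 | h2
    · refine ⟨univ, d, isClopen_univ, d.isClopen, fun _ => ?_, by simp, by simp, by simp⟩
      rwa [inter_univ, inter_eq_left.2 (sdiff_eq_empty.1 h2)]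
    obtain ⟨T, hT, h1, h2⟩ := hD.split_tgt S hP.idx_mono hP.src_clopen hP.tgt_clopen
      d.isClopen h1 h2
    exact ⟨T, d, hT, d.isClopen, fun _ => h1, fun _ => h2, by simp, by simp⟩

/-- `Q₀` and `Q₁` are the two children, at level `k + 1`, of the cell `P` of level `k`, obtained by
cutting along the clopen set `e` of `X` or of `Y`: `Q₀` lies inside `e` and `Q₁` outside. The sources
partition that of `P`; the targets are disjoint, but need not cover that of `P`, and the total excess
of target over source is at most half of that of `P`. -/
structure IsChildren (μ : Measure X) (lam : Measure Y) (K : ℕ → Set X) (F : ℕ → Set Y)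
    (k : ℕ) (e : TopologicalSpace.Clopens X ⊕ TopologicalSpace.Clopens Y)
    (P Q₀ Q₁ : Cell X Y) : Prop where
  good₀ : Good μ lam K F (k + 1) Q₀
  good₁ : Good μ lam K F (k + 1) Q₁
  src_union : Q₀.src ∪ Q₁.src = P.src
  src_disjoint : Disjoint Q₀.src Q₁.src
  tgt_subset₀ : Q₀.tgt ⊆ P.tgt
  tgt_subset₁ : Q₁.tgt ⊆ P.tgt
  tgt_disjoint : Disjoint Q₀.tgt Q₁.tgt
  idx_eq₀ : ∀ n ≤ k, Q₀.idx n = P.idx n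
  idx_eq₁ : ∀ n ≤ k, Q₁.idx n = P.idx n
  excess : (lam.real Q₀.tgt - μ.real Q₀.src) + (lam.real Q₁.tgt - μ.real Q₁.src) ≤
    (lam.real P.tgt - μ.real P.src) / 2
  sep_src : ∀ c, e = .inl c → Q₀.src ⊆ c ∧ Disjoint Q₁.src c
  sep_tgt : ∀ d, e = .inr d → Q₀.tgt ⊆ d ∧ Disjoint Q₁.tgt d

theorem Good.exists_children (S : Setting μ lam K F) {P : Cell X Y} (hP : Good μ lam K F k P)
    (e : TopologicalSpace.Clopens X ⊕ TopologicalSpace.Clopens Y) :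
    ∃ Q₀ Q₁, IsChildren μ lam K F k e P Q₀ Q₁ := by
  obtain ⟨T, R, hT, hR, h0, h1, hc, hd⟩ := hP.exists_split S e
  obtain ⟨Q₀, g0, s0, t0, i0, x0⟩ := exists_good_refinement S (hP.src_clopen.inter hT)
    (hP.tgt_clopen.inter hR) hP.idx_mono hP.idx_zero h0
  obtain ⟨Q₁, g1, s1, t1, i1, x1⟩ := exists_good_refinement S (hP.src_clopen.diff hT)
    (hP.tgt_clopen.diff hR) hP.idx_mono hP.idx_zero h1
  have hsub0 := t0.trans inter_subset_left
  have hsub1 := t1.trans sdiff_subset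
  refine ⟨Q₀, Q₁, g0, g1, ?_, ?_, hsub0, hsub1,
    disjoint_sdiff_inter.symm.mono t0 t1, i0, i1, ?_, ?_, ?_⟩
  · rw [s0, s1, inter_union_sdiff]
  · rw [s0, s1]; exact disjoint_sdiff_inter.symm
  · have e1 := measureReal_inter_add_sdiff (μ := μ) (s := P.src) hT.isOpen.measurableSet
    have e2 := measureReal_inter_add_sdiff (μ := lam) (s := P.tgt) hR.isOpen.measurableSet
    linarith
  · intro c h
    rw [s0, s1, hc c h]
    exact ⟨inter_subset_right, disjoint_sdiff_left⟩
  · intro d h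
    rcases P.tgt.eq_empty_or_nonempty with he | he
    · rw [he, subset_empty_iff] at hsub0 hsub1
      simp [hsub0, hsub1]
    · obtain rfl := hd d h he
      exact ⟨t0.trans inter_subset_right, disjoint_sdiff_left.mono_left t1⟩

end Step

/-! ### The dyadic scheme and the induced embedding -/

/-- In a dyadic tree of sets, in which node `i` of level `k` has the children `2 * i` and `2 * i + 1`,
disjointness of siblings implies disjointness of all nodes of the same level. -/
theorem dyadic_pairwise_disjoint {Z : Type*} {U : ℕ → ℕ → Set Z}
    (h0 : ∀ k i, U (k + 1) (2 * i) ⊆ U k i) (h1 : ∀ k i, U (k + 1) (2 * i + 1) ⊆ U k i)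
    (hd : ∀ k i, Disjoint (U (k + 1) (2 * i)) (U (k + 1) (2 * i + 1))) (k : ℕ) :
    ∀ i < 2 ^ k, ∀ j < 2 ^ k, i ≠ j → Disjoint (U k i) (U k j) := by
  have hpar : ∀ k i, U (k + 1) i ⊆ U k (i / 2) := fun k i => by
    rcases Nat.even_or_odd' i with ⟨a, rfl | rfl⟩
    · rw [Nat.mul_div_cancel_left a two_pos]; exact h0 k a
    · rw [show (2 * a + 1) / 2 = a by omega]; exact h1 k a
  induction k with
  | zero => intro i hi j hj hij; simp at hi hj; omega
  | succ k ih =>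
    intro i hi j hj hij
    rw [pow_succ] at hi hj
    by_cases h : i / 2 = j / 2
    · rcases Nat.even_or_odd' i with ⟨a, rfl | rfl⟩ <;>
        rcases Nat.even_or_odd' j with ⟨b, rfl | rfl⟩
      · omega
      · obtain rfl : a = b := by omega
        exact hd k a
      · obtain rfl : a = b := by omega
        exact (hd k a).symm
      · omega
    · exact (ih _ (by omega) _ (by omega) h).mono (hpar k i) (hpar k j)

theorem sum_range_two_mul (g : ℕ → ℝ) (n : ℕ) :
    ∑ i ∈ Finset.range (2 * n), g i = ∑ i ∈ Finset.range n, (g (2 * i) + g (2 * i + 1)) := by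
  induction n with
  | zero => simp
  | succ n ih =>
    rw [show 2 * (n + 1) = 2 * n + 1 + 1 by ring, Finset.sum_range_succ, Finset.sum_range_succ,
      ih, Finset.sum_range_succ]
    ring

section Scheme

set_option linter.unusedSectionVars false

open TopologicalSpace

variable {X Y : Type*}
  [TopologicalSpace X] [CompactSpace X] [T2Space X]
  [TopologicalSpace.MetrizableSpace X] [TotallyDisconnectedSpace X]
  [MeasurableSpace X] [BorelSpace X]
  [TopologicalSpace Y] [CompactSpace Y] [T2Space Y]
  [TopologicalSpace.MetrizableSpace Y] [TotallyDisconnectedSpace Y]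
  [MeasurableSpace Y] [BorelSpace Y]
  {μ : Measure X} [IsFiniteMeasure μ] {lam : Measure Y} [IsFiniteMeasure lam]
  {K : ℕ → Set X} {F : ℕ → Set Y}

/-- A dyadic tree of cells starting from `univ`, where the cells of level `k` are cut along the
clopen set `e k`. Level `k` of the tree consists of the `cell k i` with `i < 2 ^ k`; the values for
larger `i` follow the same recursion but play no role. -/
structure IsScheme (μ : Measure X) (lam : Measure Y) (K : ℕ → Set X) (F : ℕ → Set Y)
    (e : ℕ → Clopens X ⊕ Clopens Y) (cell : ℕ → ℕ → Cell X Y) : Prop where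
  good : ∀ k i, Good μ lam K F k (cell k i)
  children : ∀ k i, IsChildren μ lam K F k (e k) (cell k i) (cell (k + 1) (2 * i))
    (cell (k + 1) (2 * i + 1))
  root : ∀ i, (cell 0 i).src = univ

theorem exists_isScheme [Nonempty X] (S : Setting μ lam K F) (hlt : μ.real univ < lam.real univ)
    (e : ℕ → Clopens X ⊕ Clopens Y) : ∃ cell, IsScheme μ lam K F e cell := by
  have hroot : Good μ lam K F 0 (⟨univ, univ, fun _ => 0⟩ : Cell X Y) := by
    refine ⟨isClopen_univ, isClopen_univ, monotone_const, rfl, fun h => ?_, fun _ n hn => ?_,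
      fun n hn _ => ?_⟩
    · exact absurd h (univ_nonempty).ne_empty
    · obtain rfl : n = 0 := by omega
      simpa [S.K_zero, S.F_zero] using hlt
    · obtain rfl : n = 0 := by omega
      simp [S.F_zero]
  choose Q₀ Q₁ hQ using fun (k : ℕ) (P : {P : Cell X Y // Good μ lam K F k P}) =>
    P.2.exists_children S (e k)
  let cell : (k : ℕ) → ℕ → {P : Cell X Y // Good μ lam K F k P} := fun k =>
    Nat.rec (motive := fun k => ℕ → {P : Cell X Y // Good μ lam K F k P}) (fun _ => ⟨_, hroot⟩)
      (fun k c i => if i % 2 = 0 then ⟨Q₀ k (c (i / 2)), (hQ k _).good₀⟩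
        else ⟨Q₁ k (c (i / 2)), (hQ k _).good₁⟩) k
  have hcell : ∀ k i, cell (k + 1) i = if i % 2 = 0 then
      ⟨Q₀ k (cell k (i / 2)), (hQ k _).good₀⟩ else ⟨Q₁ k (cell k (i / 2)), (hQ k _).good₁⟩ :=
    fun _ _ => rfl
  refine ⟨fun k i => (cell k i).1, fun k i => (cell k i).2, fun k i => ?_, fun _ => rfl⟩
  have h0 : (cell (k + 1) (2 * i)).1 = Q₀ k (cell k i) := by
    rw [hcell, if_pos (by omega), Nat.mul_div_cancel_left i two_pos]
  have h1 : (cell (k + 1) (2 * i + 1)).1 = Q₁ k (cell k i) := by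
    rw [hcell, if_neg (by omega), show (2 * i + 1) / 2 = i by omega]
  rw [h0, h1]
  exact hQ k (cell k i)

namespace IsScheme

variable {e : ℕ → Clopens X ⊕ Clopens Y} {cell : ℕ → ℕ → Cell X Y}

theorem src_disjoint (H : IsScheme μ lam K F e cell) (k : ℕ) :
    ∀ i < 2 ^ k, ∀ j < 2 ^ k, i ≠ j → Disjoint (cell k i).src (cell k j).src :=
  dyadic_pairwise_disjoint (U := fun k i => (cell k i).src)
    (fun k i => (H.children k i).src_union ▸ subset_union_left)
    (fun k i => (H.children k i).src_union ▸ subset_union_right)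
    (fun k i => (H.children k i).src_disjoint) k

theorem tgt_disjoint (H : IsScheme μ lam K F e cell) (k : ℕ) :
    ∀ i < 2 ^ k, ∀ j < 2 ^ k, i ≠ j → Disjoint (cell k i).tgt (cell k j).tgt :=
  dyadic_pairwise_disjoint (U := fun k i => (cell k i).tgt)
    (fun k i => (H.children k i).tgt_subset₀) (fun k i => (H.children k i).tgt_subset₁)
    (fun k i => (H.children k i).tgt_disjoint) k

theorem succ_le (H : IsScheme μ lam K F e cell) (k i : ℕ) :
    (cell (k + 1) i).src ⊆ (cell k (i / 2)).src ∧ (cell (k + 1) i).tgt ⊆ (cell k (i / 2)).tgt ∧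
      ∀ n ≤ k, (cell (k + 1) i).idx n = (cell k (i / 2)).idx n := by
  rcases Nat.even_or_odd' i with ⟨a, rfl | rfl⟩
  · rw [Nat.mul_div_cancel_left a two_pos]
    have h := H.children k a
    exact ⟨h.src_union ▸ subset_union_left, h.tgt_subset₀, h.idx_eq₀⟩
  · rw [show (2 * a + 1) / 2 = a by omega]
    have h := H.children k a
    exact ⟨h.src_union ▸ subset_union_right, h.tgt_subset₁, h.idx_eq₁⟩

theorem sep_src (H : IsScheme μ lam K F e cell) {k : ℕ} {c : Clopens X} (hk : e k = .inl c)
    (i : ℕ) : (cell (k + 1) i).src ⊆ c ∨ Disjoint (cell (k + 1) i).src c := by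
  rcases Nat.even_or_odd' i with ⟨a, rfl | rfl⟩
  · exact Or.inl ((H.children k a).sep_src c hk).1
  · exact Or.inr ((H.children k a).sep_src c hk).2

theorem sep_tgt (H : IsScheme μ lam K F e cell) {k : ℕ} {d : Clopens Y} (hk : e k = .inr d)
    (i : ℕ) : (cell (k + 1) i).tgt ⊆ d ∨ Disjoint (cell (k + 1) i).tgt d := by
  rcases Nat.even_or_odd' i with ⟨a, rfl | rfl⟩
  · exact Or.inl ((H.children k a).sep_tgt d hk).1
  · exact Or.inr ((H.children k a).sep_tgt d hk).2

theorem exists_mem (H : IsScheme μ lam K F e cell) (x : X) (k : ℕ) :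
    ∃ i < 2 ^ k, x ∈ (cell k i).src := by
  induction k with
  | zero => exact ⟨0, by simp, by simp [H.root]⟩
  | succ k ih =>
    obtain ⟨i, hi, hx⟩ := ih
    rw [← (H.children k i).src_union] at hx
    rcases hx with hx | hx
    · exact ⟨2 * i, by rw [pow_succ]; omega, hx⟩
    · exact ⟨2 * i + 1, by rw [pow_succ]; omega, hx⟩

theorem measureReal_src_le (S : Setting μ lam K F) (H : IsScheme μ lam K F e cell) (k i : ℕ) :
    μ.real (cell k i).src ≤ lam.real (cell k i).tgt := by
  rcases (cell k i).src.eq_empty_or_nonempty with h | h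
  · simp [h]
  · have := (H.good k i).dom h 0 (Nat.zero_le _)
    rw [(H.good k i).idx_zero, S.K_zero, S.F_zero, sdiff_empty, sdiff_empty] at this
    exact this.le

/-- The total excess at level `k` is at most `2 ^ (-k)` times the initial one. -/
theorem sum_excess (H : IsScheme μ lam K F e cell) (k : ℕ) :
    ∑ i ∈ Finset.range (2 ^ k), (lam.real (cell k i).tgt - μ.real (cell k i).src) ≤
      (lam.real (cell 0 0).tgt - μ.real (cell 0 0).src) / 2 ^ k := by
  induction k with
  | zero => simp
  | succ k ih =>
    rw [pow_succ' 2 k, sum_range_two_mul]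
    calc _ ≤ ∑ i ∈ Finset.range (2 ^ k),
          (lam.real (cell k i).tgt - μ.real (cell k i).src) / 2 :=
          Finset.sum_le_sum fun i _ => (H.children k i).excess
      _ ≤ _ := by
          rw [← Finset.sum_div, pow_succ', ← div_div, div_right_comm]
          linarith

theorem measureReal_iUnion_tgt_le (H : IsScheme μ lam K F e cell) (k : ℕ) :
    lam.real (⋃ i ∈ Finset.range (2 ^ k), (cell k i).tgt) ≤
      μ.real univ + (lam.real (cell 0 0).tgt - μ.real (cell 0 0).src) / 2 ^ k := by
  have h1 := H.sum_excess k
  rw [Finset.sum_sub_distrib] at h1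
  have h2 : ∑ i ∈ Finset.range (2 ^ k), μ.real (cell k i).src ≤ μ.real univ := by
    apply sum_measureReal_le_measureReal_univ
    · exact fun i _ => (H.good k i).src_clopen.isOpen.measurableSet
    · intro i hi j hj hij
      exact H.src_disjoint k i (by simpa using hi) j (by simpa using hj) hij
  have h3 := measureReal_biUnion_finset_le (μ := lam) (Finset.range (2 ^ k))
    fun i => (cell k i).tgt
  linarith

/-- `f` is a map induced by the tree: `t x k` is the position of the cell of level `k` around `x`,
and `f x` lies in the targets of all these cells. -/
structure Follows (cell : ℕ → ℕ → Cell X Y) (f : X → Y) (t : X → ℕ → ℕ) : Prop where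
  lt : ∀ x k, t x k < 2 ^ k
  mem_src : ∀ x k, x ∈ (cell k (t x k)).src
  mem_tgt : ∀ x k, f x ∈ (cell k (t x k)).tgt

theorem eq_of_mem (H : IsScheme μ lam K F e cell) {x : X} {k i j : ℕ} (hi : i < 2 ^ k)
    (hj : j < 2 ^ k) (hxi : x ∈ (cell k i).src) (hxj : x ∈ (cell k j).src) : i = j := by
  by_contra h
  exact disjoint_left.1 (H.src_disjoint k i hi j hj h) hxi hxj

theorem step_eq (H : IsScheme μ lam K F e cell) {t : ℕ → ℕ} {x : X}
    (ht : ∀ k, t k < 2 ^ k) (hx : ∀ k, x ∈ (cell k (t k)).src) (k : ℕ) :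
    t (k + 1) / 2 = t k := by
  have := ht (k + 1)
  rw [pow_succ] at this
  exact H.eq_of_mem (by omega) (ht k) ((H.succ_le k _).1 (hx (k + 1))) (hx k)

theorem exists_follows (H : IsScheme μ lam K F e cell) :
    ∃ (f : X → Y) (t : X → ℕ → ℕ), Follows cell f t := by
  choose t ht hx using H.exists_mem
  have hne : ∀ x, (⋂ k, (cell k (t x k)).tgt).Nonempty := fun x => by
    refine IsCompact.nonempty_iInter_of_sequence_nonempty_isCompact_isClosed _ (fun k => ?_)
      (fun k => ((H.good k _).dom ⟨x, hx x k⟩).nonempty)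
      (H.good 0 _).tgt_clopen.isClosed.isCompact (fun k => (H.good k _).tgt_clopen.isClosed)
    have := (H.succ_le k (t x (k + 1))).2.1
    rwa [H.step_eq (ht x) (hx x)] at this
  choose f hf using hne
  exact ⟨f, t, ht, hx, fun x k => mem_iInter.1 (hf x) k⟩

variable {f : X → Y} {t : X → ℕ → ℕ}

theorem continuous (H : IsScheme μ lam K F e cell) (he : e.Surjective) (hf : Follows cell f t) :
    Continuous f := by
  refine (isTopologicalBasis_isClopen (X := Y)).continuous_iff.2 fun d hd => ?_
  obtain ⟨k, hk⟩ := he (.inr ⟨d, hd⟩)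
  refine isOpen_iff_mem_nhds.2 fun x hx => ?_
  refine Filter.mem_of_superset ((H.good (k + 1) _).src_clopen.isOpen.mem_nhds
    (hf.mem_src x (k + 1))) fun y hy => ?_
  have hty := H.eq_of_mem (hf.lt y _) (hf.lt x _) (hf.mem_src y (k + 1)) hy
  rcases H.sep_tgt hk (t x (k + 1)) with h | h
  · have := hf.mem_tgt y (k + 1)
    rw [hty] at this
    exact h this
  · exact absurd hx (disjoint_left.1 h (hf.mem_tgt x (k + 1)))

theorem injective (H : IsScheme μ lam K F e cell) (he : e.Surjective) (hf : Follows cell f t) :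
    f.Injective := by
  intro x y hxy
  by_contra hne
  obtain ⟨c, hc, hxc, hyc⟩ := exists_isClopen_of_totally_separated hne
  obtain ⟨k, hk⟩ := he (.inl ⟨c, hc⟩)
  by_cases h : t x (k + 1) = t y (k + 1)
  · have hy := hf.mem_src y (k + 1)
    rw [← h] at hy
    rcases H.sep_src hk (t x (k + 1)) with h' | h'
    · exact hyc (h' hy)
    · exact disjoint_left.1 h' (hf.mem_src x (k + 1)) hxc
  · refine disjoint_left.1 (H.tgt_disjoint (k + 1) _ (hf.lt x _) _ (hf.lt y _) h)
      (hf.mem_tgt x _) ?_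
    rw [hxy]
    exact hf.mem_tgt y _

/-- If `x` lies in no `K n`, then `f x` lies in no `F n`. The index `M = m n` of the cells around
`x` is constant from level `n` on; once a cell around `x` misses `K M`, avoidance applies. -/
theorem mapsTo (S : Setting μ lam K F) (H : IsScheme μ lam K F e cell) (he : e.Surjective)
    (hf : Follows cell f t) {x : X} (hx : ∀ n, x ∉ K n) (n : ℕ) : f x ∉ F n := by
  have hstep := H.step_eq (hf.lt x) (hf.mem_src x)
  have hidx : ∀ j, (cell (n + j) (t x (n + j))).idx n = (cell n (t x n)).idx n := fun j => by
    induction j with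
    | zero => rfl
    | succ j ih =>
      rw [← ih, ← hstep (n + j)]
      exact (H.succ_le (n + j) _).2.2 n (by omega)
  have hanti : Antitone fun k => (cell k (t x k)).src := antitone_nat_of_succ_le fun k => by
    have := (H.succ_le k (t x (k + 1))).1
    rwa [hstep] at this
  set M := (cell n (t x n)).idx n
  obtain ⟨c, hc, hxc, hcK⟩ := compact_exists_isClopen_in_isOpen (S.K_closed M).isOpen_compl (hx M)
  obtain ⟨k, hk⟩ := he (.inl ⟨c, hc⟩)
  have hsub : (cell (k + 1) (t x (k + 1))).src ⊆ c := by
    rcases H.sep_src hk (t x (k + 1)) with h | h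
    · exact h
    · exact absurd hxc (disjoint_left.1 h (hf.mem_src x _))
  have hd : Disjoint (cell (n + (k + 1)) (t x (n + (k + 1)))).src (K M) :=
    disjoint_left.2 fun z hz => hcK (hsub (hanti (by omega : k + 1 ≤ n + (k + 1)) hz))
  rw [← hidx (k + 1)] at hd
  exact disjoint_left.1 ((H.good _ _).avoid n (by omega) hd) (hf.mem_tgt x _)

/-- Once the tree has been cut along `d`, the cells with target inside `d` contain `f ⁻¹' d` in
their sources, and sources are no larger than targets. -/
theorem measureReal_preimage_isClopen_le (S : Setting μ lam K F) (H : IsScheme μ lam K F e cell)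
    (he : e.Surjective) (hf : Follows cell f t) {d : Set Y} (hd : IsClopen d) :
    μ.real (f ⁻¹' d) ≤ lam.real d := by
  classical
  obtain ⟨k, hk⟩ := he (.inr ⟨d, hd⟩)
  set J := (Finset.range (2 ^ (k + 1))).filter fun i => (cell (k + 1) i).tgt ⊆ d with hJ
  have h1 : f ⁻¹' d ⊆ ⋃ i ∈ J, (cell (k + 1) i).src := fun x hx => by
    refine mem_biUnion (x := t x (k + 1)) ?_ (hf.mem_src x _)
    simp only [hJ, Finset.coe_filter, Finset.mem_range, mem_ofPred_eq]
    refine ⟨hf.lt x _, ?_⟩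
    rcases H.sep_tgt hk (t x (k + 1)) with h | h
    · exact h
    · exact absurd hx (disjoint_left.1 h (hf.mem_tgt x _))
  calc μ.real (f ⁻¹' d) ≤ μ.real (⋃ i ∈ J, (cell (k + 1) i).src) :=
        measureReal_mono h1 (measure_ne_top _ _)
    _ ≤ ∑ i ∈ J, μ.real (cell (k + 1) i).src := measureReal_biUnion_finset_le _ _
    _ ≤ ∑ i ∈ J, lam.real (cell (k + 1) i).tgt :=
        Finset.sum_le_sum fun i _ => H.measureReal_src_le S _ _
    _ = lam.real (⋃ i ∈ J, (cell (k + 1) i).tgt) := by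
        refine (measureReal_biUnion_finset (fun i hi j hj hij => ?_)
          fun i _ => (H.good _ _).tgt_clopen.isOpen.measurableSet).symm
        simp only [hJ, Finset.coe_filter, Finset.mem_range, mem_ofPred_eq] at hi hj
        exact H.tgt_disjoint (k + 1) i hi.1 j hj.1 hij
    _ ≤ lam.real d := measureReal_mono (iUnion₂_subset fun i hi => (Finset.mem_filter.1 hi).2)

theorem measureReal_preimage_le (S : Setting μ lam K F) (H : IsScheme μ lam K F e cell)
    (he : e.Surjective) (hf : Follows cell f t) {B : Set Y} (hB : MeasurableSet B) :
    μ.real (f ⁻¹' B) ≤ lam.real B := by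
  have hfm := (H.continuous he hf).measurable
  refine le_of_forall_pos_le_add fun ε hε => ?_
  -- Approximating for the sum controls `B` and `f ⁻¹' B` by the same clopen set.
  obtain ⟨T, hT, hTB⟩ := exists_isClopen_symmDiff_lt (μ.map f + lam) hB hε
  rw [measureReal_add_apply, map_measureReal_apply hfm
    (hB.symmDiff hT.isOpen.measurableSet)] at hTB
  have h1 : μ.real (f ⁻¹' B) ≤ μ.real (f ⁻¹' T) + μ.real (f ⁻¹' (symmDiff B T)) :=
    (measureReal_mono (by
      intro x hx
      by_cases h : f x ∈ T
      · exact Or.inl h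
      · exact Or.inr (Or.inl ⟨hx, h⟩))).trans (measureReal_union_le _ _)
  have h2 : lam.real T ≤ lam.real B + lam.real (symmDiff B T) :=
    (measureReal_mono (by
      intro y hy
      by_cases h : y ∈ B
      · exact Or.inl h
      · exact Or.inr (Or.inr ⟨hy, h⟩))).trans (measureReal_union_le _ _)
  linarith [H.measureReal_preimage_isClopen_le S he hf hT]

/-- `range f` is covered by the targets of level `k`, whose total measure tends to `μ univ`. -/
theorem measureReal_range_le (H : IsScheme μ lam K F e cell) (hf : Follows cell f t) :
    lam.real (range f) ≤ μ.real univ := by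
  set s := lam.real (cell 0 0).tgt - μ.real (cell 0 0).src
  have hlim : Filter.Tendsto (fun k : ℕ => μ.real univ + s / 2 ^ k) Filter.atTop
      (nhds (μ.real univ + 0)) :=
    tendsto_const_nhds.add (tendsto_const_nhds.div_atTop
      (tendsto_pow_atTop_atTop_of_one_lt one_lt_two))
  rw [add_zero] at hlim
  refine ge_of_tendsto' hlim fun k =>
    (measureReal_mono ?_ (measure_ne_top _ _)).trans (H.measureReal_iUnion_tgt_le k)
  rintro _ ⟨x, rfl⟩
  exact mem_biUnion (by simpa using hf.lt x k) (hf.mem_tgt x k)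

/-- `measureReal_preimage_le` bounds `μ B` by `lam (f '' B)` and `μ Bᶜ` by `lam (f '' Bᶜ)`. The two
upper bounds sum to `lam (range f) ≤ μ univ`, so both are equalities. -/
theorem measure_image (S : Setting μ lam K F) (H : IsScheme μ lam K F e cell)
    (he : e.Surjective) (hf : Follows cell f t) {B : Set X} (hB : MeasurableSet B) :
    lam (f '' B) = μ B := by
  have hinj := H.injective he hf
  have hemb := ((H.continuous he hf).isClosedEmbedding hinj).measurableEmbedding
  have h1 := H.measureReal_preimage_le S he hf (hemb.measurableSet_image' hB)
  have h2 := H.measureReal_preimage_le S he hf (hemb.measurableSet_image' hB.compl)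
  rw [preimage_image_eq _ hinj] at h1 h2
  have h3 := H.measureReal_range_le hf
  have h4 := measureReal_add_measureReal_compl (μ := μ) hB
  have h5 : lam.real (range f) = lam.real (f '' B) + lam.real (f '' Bᶜ) := by
    rw [← measureReal_union ((disjoint_image_iff hinj).2 disjoint_compl_right)
      (hemb.measurableSet_image' hB.compl), ← image_union, union_compl_self, image_univ]
  refine (ENNReal.toReal_eq_toReal_iff' (measure_ne_top _ _) (measure_ne_top _ _)).1 ?_
  change lam.real (f '' B) = μ.real B
  linarith

end IsScheme

end Scheme

/-! ### The embedding theorem -/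

theorem exists_closed_exhaustion {Z : Type*} [TopologicalSpace Z] {G : Set Z} (hG : IsGδ G) :
    ∃ K : ℕ → Set Z, (∀ n, IsClosed (K n)) ∧ Monotone K ∧ K 0 = ∅ ∧ ⋃ n, K n = Gᶜ := by
  obtain ⟨U, hU, rfl⟩ := hG.eq_iInter_nat
  refine ⟨fun n => ⋃ j ∈ Finset.range n, (U j)ᶜ, fun n => ?_, fun i j hij => ?_, by simp, ?_⟩
  · exact (Finset.range n).finite_toSet.isClosed_biUnion fun j _ => (hU j).isClosed_compl
  · exact biUnion_subset_biUnion_left fun a ha => by simp at ha ⊢; omega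
  · ext z
    simp only [mem_iUnion, compl_iInter, mem_compl_iff, Finset.mem_range]
    exact ⟨fun ⟨_, j, _, h⟩ => ⟨j, h⟩, fun ⟨j, h⟩ => ⟨j + 1, j, j.lt_succ_self, h⟩⟩

/-- Embedding of a Cantor measure space into a bigger one, sending a null Gδ set
into a dense null Gδ set. -/
theorem stmt3 {X Y : Type*}
    [TopologicalSpace X] [CompactSpace X] [T2Space X]
    [TopologicalSpace.MetrizableSpace X] [TotallyDisconnectedSpace X]
    [MeasurableSpace X] [BorelSpace X]
    [TopologicalSpace Y] [CompactSpace Y] [T2Space Y]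
    [TopologicalSpace.MetrizableSpace Y] [TotallyDisconnectedSpace Y]
    [MeasurableSpace Y] [BorelSpace Y]
    (μ : Measure X) [IsFiniteMeasure μ] (lam : Measure Y) [IsFiniteMeasure lam]
    (hperfX : ∀ x : X, ¬ IsOpen ({x} : Set X))
    (hperfY : ∀ y : Y, ¬ IsOpen ({y} : Set Y))
    (hcontX : ∀ x : X, μ {x} = 0)
    (hcontY : ∀ y : Y, lam {y} = 0)
    (hlt : μ Set.univ < lam Set.univ)
    (hposY : ∀ U : Set Y, IsOpen U → U.Nonempty → 0 < lam U)
    (GX : Set X) (GY : Set Y) (hGX : IsGδ GX) (hGY : IsGδ GY)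
    (hGXnull : μ GX = 0) (hGYnull : lam GY = 0) (hGYdense : Dense GY) :
    ∃ f : X → Y, Topology.IsEmbedding f ∧
      (∀ B : Set X, MeasurableSet B → lam (f '' B) = μ B) ∧
      f '' GX ⊆ GY := by
  rcases isEmpty_or_nonempty X with hX | hX
  · refine ⟨fun x => hX.elim x, .of_subsingleton _, fun B _ => ?_, ?_⟩
    · simp [Set.eq_empty_of_isEmpty B]
    · rintro _ ⟨x, -⟩
      exact hX.elim x
  obtain ⟨K, hKc, hKm, hK0, hKG⟩ := exists_closed_exhaustion hGX
  obtain ⟨F, hFc, hFm, hF0, hFG⟩ := exists_closed_exhaustion hGY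
  have S : Setting μ lam K F := by
    refine ⟨hcontX, hcontY, hKc, hKm, hK0, fun ε hε => ?_, hFc, hFm, hF0, fun n U hU hne => ?_⟩
    -- The sets `(K n)ᶜ` decrease to the null set `GX`.
    · have h := tendsto_measure_iInter_atTop (μ := μ) (s := fun n => (K n)ᶜ)
        (fun n => (hKc n).measurableSet.compl.nullMeasurableSet)
        (fun i j hij => compl_subset_compl.2 (hKm hij)) ⟨0, measure_ne_top _ _⟩
      rw [← compl_iUnion, hKG, compl_compl, hGXnull] at h
      have h' := (ENNReal.tendsto_toReal ENNReal.zero_ne_top).comp h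
      exact (h'.eventually_lt_const (by simpa using hε)).exists
    -- `U \ F n` is open, and nonempty because it contains a point of `GY`.
    · obtain ⟨y, hyU, hyG⟩ := hGYdense.inter_open_nonempty U hU hne
      have hy : y ∉ F n := fun h => (hFG ▸ mem_iUnion_of_mem n h : y ∈ GYᶜ) hyG
      exact ENNReal.toReal_pos (hposY _ (hU.sdiff (hFc n)) ⟨y, hyU, hy⟩).ne' (measure_ne_top _ _)
  have hlt' : μ.real univ < lam.real univ :=
    (ENNReal.toReal_lt_toReal (measure_ne_top _ _) (measure_ne_top _ _)).2 hlt
  have : SecondCountableTopology X := by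
    let := TopologicalSpace.metrizableSpaceMetric X
    infer_instance
  have : SecondCountableTopology Y := by
    let := TopologicalSpace.metrizableSpaceMetric Y
    infer_instance
  have := TopologicalSpace.Clopens.countable_iff_secondCountable.2 ‹SecondCountableTopology X›
  have := TopologicalSpace.Clopens.countable_iff_secondCountable.2 ‹SecondCountableTopology Y›
  -- By second countability there are only countably many clopen sets to cut along.
  obtain ⟨e, he⟩ := exists_surjective_nat
    (TopologicalSpace.Clopens X ⊕ TopologicalSpace.Clopens Y)
  obtain ⟨cell, H⟩ := exists_isScheme S hlt' e
  obtain ⟨f, t, hf⟩ := H.exists_follows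
  refine ⟨f, ((H.continuous he hf).isClosedEmbedding (H.injective he hf)).isEmbedding,
    fun B hB => H.measure_image S he hf hB, ?_⟩
  rintro _ ⟨x, hx, rfl⟩
  by_contra hfx
  obtain ⟨n, hn⟩ := mem_iUnion.1 (hFG.symm ▸ hfx : f x ∈ ⋃ n, F n)
  exact H.mapsTo S he hf (fun j hj => (hKG ▸ mem_iUnion_of_mem j hj : x ∈ GXᶜ) hx) n hn
end

section
/- Let (X,μ) be a good Cantor measure space, A a closed nowhere dense subset of X, and B ⊆ X a Borel subset with μ(B) > μ(A). Then there exists a measure-preserving homeomorphism h : X → X with h(A) ⊆ B. -/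
open MeasureTheory Set

/-!
Choose a closed `K ⊆ B` with `μ A < μ K`. The homeomorphism is built by a back-and-forth argument,
as the limit of a sequence of pairs of finite clopen partitions of `X` whose cells correspond
bijectively, matched cells `U` (source) and `V` (target) having equal measure and satisfying

  `A ∩ U = ∅` or `μ (A ∩ U) < μ (K ∩ V)`.

Every clopen set is eventually a union of cells on either side. Since nonempty open sets have
positive measure, compactness gives for each point `x` exactly one point `h x` lying, at every
stage, in the cell matched with the cell of `x`. The map `h` is a homeomorphism, it preserves the
measure of every clopen set and hence `μ`, and if `x ∈ A` then every cell containing `h x` meets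
the closed set `K`, so `h x ∈ K`.

The invariant survives refinement in both directions.

* If `U` is cut by a clopen set into nonempty pieces (`Matched.forth`), then `A` being nowhere
  dense gives strict inequalities between the measures of `A` and of the pieces. These leave an
  open range of values `t` for the measure of `K` inside the corresponding piece of `V`.
* If `V` is cut (`Matched.back`) and both pieces carry positive measure of `K`, the same argument
  distributes `A ∩ U` over the two pieces of `U`. If one piece carries no measure of `K`, its
  partner is chosen disjoint from `A` (`SubsetCondition.exists_avoiding`).

The pieces come from `SubsetCondition.exists_approx`: Sierpiński's theorem for atomless measures
gives a Borel set with exactly the desired measures inside and outside `K`, regularity replaces it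
by a clopen set with almost the same measures, and the Subset Condition then corrects the total
measure to its exact value by adding or removing a small clopen set (`SubsetCondition.adjust`).
-/

/-! ### Intermediate values of atomless measures -/

section Measure

variable {X : Type*} [MeasurableSpace X]

/-- Sierpiński's theorem: an atomless finite measure on a standard Borel space takes every
intermediate value on the measurable subsets of a given measurable set. -/
lemma exists_measurable_subset_real_eq [StandardBorelSpace X] (μ : Measure X) [IsFiniteMeasure μ]
    (hcont : ∀ x : X, μ {x} = 0) {E : Set X} (hE : MeasurableSet E) {t : ℝ}
    (h0 : 0 ≤ t) (h1 : t ≤ μ.real E) :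
    ∃ F ⊆ E, MeasurableSet F ∧ μ.real F = t := by
  rcases h0.eq_or_lt with rfl | h0
  · exact ⟨∅, empty_subset _, MeasurableSet.empty, by simp⟩
  rcases h1.eq_or_lt with rfl | h1
  · exact ⟨E, Subset.rfl, hE, rfl⟩
  obtain ⟨e, he⟩ := exists_measurableEmbedding_real X
  -- On the real line the value `t` is reached by the distribution function, which is continuous.
  set ν : Measure ℝ := (μ.restrict E).map e with hν
  have hνa : ∀ S, MeasurableSet S → ν S = μ (e ⁻¹' S ∩ E) := by
    intro S hS
    rw [hν, Measure.map_apply he.measurable hS, Measure.restrict_apply (he.measurable hS)]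
  have : NullSingletonClass ν := by
    refine ⟨fun r => ?_⟩
    rw [hνa _ (measurableSet_singleton r)]
    have hs : (e ⁻¹' {r} ∩ E).Subsingleton := by
      intro x hx y hy
      exact he.injective ((hx.1 : e x = r).trans (hy.1 : e y = r).symm)
    rcases hs.eq_empty_or_singleton with h | ⟨x, h⟩
    · rw [h]; simp
    · rw [h]; exact hcont x
  have hc : Continuous fun b : ℝ => ν.real (Iic b) := by
    have h := intervalIntegral.continuous_primitive (μ := ν) (f := fun _ => (1 : ℝ))
      (fun a b => intervalIntegrable_const) 0
    have h' : (fun b : ℝ => ν.real (Iic b))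
        = fun b => (∫ _x in (0 : ℝ)..b, (1 : ℝ) ∂ν) + ν.real (Iic 0) := by
      funext b
      rw [← intervalIntegral.integral_Iic_sub_Iic (integrable_const _) (integrable_const _)]
      simp
    rw [h']
    exact h.add continuous_const
  have htop : Filter.Tendsto (fun b : ℝ => ν.real (Iic b)) Filter.atTop (nhds (ν.real univ)) :=
    (ENNReal.tendsto_toReal (measure_ne_top ν _)).comp (tendsto_measure_Iic_atTop ν)
  have hbot : Filter.Tendsto (fun b : ℝ => ν.real (Iic b)) Filter.atBot (nhds 0) := by
    have h := tendsto_measure_iInter_atBot (μ := ν) (s := fun b : ℝ => Iic b)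
      (fun b => measurableSet_Iic.nullMeasurableSet) (fun a b hab => Iic_subset_Iic.2 hab)
      ⟨0, measure_ne_top _ _⟩
    have h2 : (⋂ b : ℝ, Iic b) = ∅ := by
      ext x
      simp only [mem_iInter, mem_Iic, mem_empty_iff_false, iff_false, not_forall, not_le]
      exact exists_lt x
    rw [h2, measure_empty] at h
    exact (ENNReal.tendsto_toReal ENNReal.zero_ne_top).comp h
  have huniv : ν.real univ = μ.real E := by simp [Measure.real, hνa _ MeasurableSet.univ]
  obtain ⟨b, hb⟩ := mem_range_of_exists_le_of_exists_ge (c := t) hc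
    ((hbot.eventually_lt_const h0).exists.imp fun _ h => h.le)
    ((htop.eventually_const_lt (huniv ▸ h1)).exists.imp fun _ h => h.le)
  refine ⟨e ⁻¹' Iic b ∩ E, inter_subset_right, (he.measurable measurableSet_Iic).inter hE, ?_⟩
  rw [← hb]
  simp [Measure.real, hνa _ measurableSet_Iic]

lemma standardBorelSpace_of_compact {X : Type*} [TopologicalSpace X] [CompactSpace X]
    [TopologicalSpace.MetrizableSpace X] [MeasurableSpace X] [BorelSpace X] :
    StandardBorelSpace X := by
  let _ := TopologicalSpace.metrizableSpaceMetric X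
  infer_instance

end Measure

/-! ### Clopen sets of prescribed measure -/

section Good

set_option linter.unusedSectionVars false

variable {X : Type*} [TopologicalSpace X] [CompactSpace X] [T2Space X]
  [TopologicalSpace.MetrizableSpace X] [TotallyDisconnectedSpace X]
  [MeasurableSpace X] [BorelSpace X]

/-- The Subset Condition, for the real-valued measure and with a weak inequality. -/
def SubsetCondition (μ : Measure X) : Prop :=
  ∀ U V : Set X, IsClopen U → IsClopen V → μ.real U ≤ μ.real V →
    ∃ W, W ⊆ V ∧ IsClopen W ∧ μ.real W = μ.real U

/-- A clopen `W ⊆ V` can be enlarged or shrunk inside `V` to a clopen set having the measure of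
a prescribed clopen set, so that the two sets differ by as little as their measures do. -/
lemma SubsetCondition.adjust {μ : Measure X} [IsFiniteMeasure μ] (hsc : SubsetCondition μ)
    {V W C : Set X} (hV : IsClopen V) (hW : IsClopen W) (hC : IsClopen C) (hWV : W ⊆ V)
    (hCV : μ.real C ≤ μ.real V) :
    ∃ W', W' ⊆ V ∧ IsClopen W' ∧ μ.real W' = μ.real C ∧ (W ⊆ W' ∨ W' ⊆ W) := by
  rcases le_total (μ.real C) (μ.real W) with h | h
  · obtain ⟨W', h1, h2, h3⟩ := hsc C W hC hW h
    exact ⟨W', h1.trans hWV, h2, h3, Or.inr h1⟩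
  · -- The missing measure is itself the measure of a clopen set, `C \ D`.
    obtain ⟨D, hDC, hD, hDm⟩ := hsc W C hW hC h
    have e1 := measureReal_sdiff (μ := μ) hDC hD.isOpen.measurableSet
    have e2 := measureReal_sdiff (μ := μ) hWV hW.isOpen.measurableSet
    obtain ⟨Z, hZ, hZc, hZm⟩ := hsc (C \ D) (V \ W) (hC.diff hD) (hV.diff hW) (by linarith)
    have hdis : Disjoint W Z := (disjoint_sdiff_right).mono_right hZ
    refine ⟨W ∪ Z, union_subset hWV (hZ.trans sdiff_subset), hW.union hZc, ?_,
      Or.inl subset_union_left⟩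
    rw [measureReal_union hdis hZc.isOpen.measurableSet]
    linarith

/-- Realizing prescribed measures: `V` has a clopen subset with the measure of a given clopen set `C`
that contains approximately the measure `t` of `K`, provided `t` passes the obvious size bounds. -/
lemma SubsetCondition.exists_approx {μ : Measure X} [IsFiniteMeasure μ] (hsc : SubsetCondition μ)
    (hcont : ∀ x : X, μ {x} = 0) {V K C : Set X} (hV : IsClopen V) (hK : MeasurableSet K)
    (hC : IsClopen C) {t ε : ℝ} (h0 : 0 ≤ t) (ht : t ≤ μ.real (K ∩ V)) (htc : t ≤ μ.real C)
    (htd : μ.real C - t ≤ μ.real V - μ.real (K ∩ V)) (hε : 0 < ε) :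
    ∃ W, W ⊆ V ∧ IsClopen W ∧ μ.real W = μ.real C ∧ |μ.real (K ∩ W) - t| < ε := by
  have : StandardBorelSpace X := standardBorelSpace_of_compact
  have hKV := hK.inter hV.isOpen.measurableSet
  have e0 := measureReal_sdiff (μ := μ) (inter_subset_right : K ∩ V ⊆ V) hKV
  obtain ⟨E, hE, hEm, hEt⟩ := exists_measurable_subset_real_eq μ hcont hKV h0 ht
  obtain ⟨F, hF, hFm, hFt⟩ := exists_measurable_subset_real_eq μ hcont
    (hV.isOpen.measurableSet.diff hKV) (t := μ.real C - t) (by linarith) (by linarith)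
  have hEF : Disjoint E F := disjoint_sdiff_right.mono hE hF
  have hGm : MeasurableSet (E ∪ F) := hEm.union hFm
  have hGr := measureReal_union (μ := μ) hEF hFm
  have hδ : ENNReal.ofReal (ε / 6) ≠ 0 := by simp; linarith
  obtain ⟨O, hGO, hO, -, hOm⟩ := hGm.exists_isOpen_sdiff_lt (measure_ne_top μ _) hδ
  obtain ⟨Z, hZG, hZ, hZm⟩ := hGm.exists_isClosed_sdiff_lt (measure_ne_top μ _) hδ
  obtain ⟨D, hD, hZD, hDO⟩ := exists_clopen_of_closed_subset_open hZ hO (hZG.trans hGO)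
  have hr : ∀ S, μ S < ENNReal.ofReal (ε / 6) → μ.real S < ε / 6 := fun S h =>
    (ENNReal.lt_ofReal_iff_toReal_lt (measure_ne_top _ _)).1 h
  have hOr := hr _ hOm
  have hZr := hr _ hZm
  have hGV : E ∪ F ⊆ V := union_subset (hE.trans inter_subset_right) (hF.trans sdiff_subset)
  set W₀ := D ∩ V with hW₀
  have hW₀c : IsClopen W₀ := hD.inter hV
  have d1 : μ.real (W₀ \ (E ∪ F)) < ε / 6 :=
    (measureReal_mono (sdiff_subset_sdiff_left (inter_subset_left.trans hDO))).trans_lt hOr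
  have d2 : μ.real ((E ∪ F) \ W₀) < ε / 6 := by
    refine (measureReal_mono ?_).trans_lt hZr
    rintro x ⟨hx, hxW⟩
    exact ⟨hx, fun hxZ => hxW ⟨hZD hxZ, hGV hx⟩⟩
  obtain ⟨W, hWV, hW, hWm, hcomp⟩ := hsc.adjust hV hW₀c hC inter_subset_right
    (by have := measureReal_mono (μ := μ) hGV; linarith)
  -- The measures of `S` inside `P` and inside `Q` are close if `P \ Q` and `Q \ P` are small.
  have key : ∀ (S P Q : Set X), MeasurableSet Q →
      μ.real (S ∩ P) ≤ μ.real (S ∩ Q) + μ.real (P \ Q) := by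
    intro S P Q hQ
    refine (measureReal_mono (μ := μ) (s₂ := (S ∩ Q) ∪ (P \ Q)) ?_).trans (measureReal_union_le _ _)
    rintro x ⟨h1, h2⟩
    by_cases hx : x ∈ Q
    · exact Or.inl ⟨h1, hx⟩
    · exact Or.inr ⟨h2, hx⟩
  have a1 := key univ W₀ (E ∪ F) hGm
  have a2 := key univ (E ∪ F) W₀ hW₀c.isOpen.measurableSet
  have a3 := key K W₀ (E ∪ F) hGm
  have a4 := key K (E ∪ F) W₀ hW₀c.isOpen.measurableSet
  have a5 := key K W₀ W hW.isOpen.measurableSet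
  have a6 := key K W W₀ hW₀c.isOpen.measurableSet
  simp only [univ_inter] at a1 a2
  have hKG : K ∩ (E ∪ F) = E := by
    ext x
    constructor
    · rintro ⟨h1, h2 | h2⟩
      · exact h2
      · exact absurd ⟨h1, (hF h2).1⟩ (hF h2).2
    · exact fun h => ⟨(hE h).1, Or.inl h⟩
  rw [hKG] at a3 a4
  refine ⟨W, hWV, hW, hWm, ?_⟩
  rw [abs_lt]
  rcases hcomp with h | h
  · have b1 := measureReal_sdiff (μ := μ) h hW₀c.isOpen.measurableSet
    rw [sdiff_eq_empty.2 h, measureReal_empty] at a5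
    constructor <;> linarith
  · have b1 := measureReal_sdiff (μ := μ) h hW.isOpen.measurableSet
    rw [sdiff_eq_empty.2 h, measureReal_empty] at a6
    constructor <;> linarith


/-! ### Refining a pair of matched cells -/

/-- Invariant relating a clopen cell `U` of the source partition to the cell `V` of the target
partition it is matched with. It forces `V` to meet `K` as soon as `U` meets `A`, and leaves enough
room in `K ∩ V` for further refinements. -/
def Matched (μ : Measure X) (A K U V : Set X) : Prop :=
  μ.real U = μ.real V ∧ (Disjoint A U ∨ μ.real (A ∩ U) < μ.real (K ∩ V))

lemma exists_between_weak_strict {L M p q : ℝ} (h1 : L ≤ M) (h2 : L < q) (h3 : p < M)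
    (h4 : p < q) : ∃ t, L ≤ t ∧ t ≤ M ∧ p < t ∧ t < q := by
  refine ⟨(max L p + min M q) / 2, ?_, ?_, ?_, ?_⟩ <;>
  rcases max_cases L p with ⟨h, _⟩ | ⟨h, _⟩ <;> rcases min_cases M q with ⟨h', _⟩ | ⟨h', _⟩ <;>
  rw [h, h'] <;> linarith

lemma measureReal_inter_sdiff {μ : Measure X} [IsFiniteMeasure μ] {S U W : Set X}
    (hW : MeasurableSet W) (h : W ⊆ U) :
    μ.real (S ∩ (U \ W)) = μ.real (S ∩ U) - μ.real (S ∩ W) := by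
  have h1 := measureReal_inter_add_sdiff (μ := μ) (s := S ∩ U) hW
  have h2 : S ∩ U ∩ W = S ∩ W := by rw [inter_assoc, inter_eq_right.2 h]
  rw [h2] at h1
  rw [← inter_sdiff_assoc]
  linarith

/-- Refinement on the source side: a clopen cut `C` of `U` is matched by a clopen cut of `V`.
Here `hlt` encodes that `A` is nowhere dense. -/
lemma Matched.forth {μ : Measure X} [IsFiniteMeasure μ] (hsc : SubsetCondition μ)
    (hcont : ∀ x : X, μ {x} = 0) {A K U V C : Set X}
    (hlt : ∀ U, IsClopen U → U.Nonempty → μ.real (A ∩ U) < μ.real U) (hK : MeasurableSet K)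
    (hU : IsClopen U) (hV : IsClopen V) (hC : IsClopen C) (hUV : Matched μ A K U V) :
    ∃ W, W ⊆ V ∧ IsClopen W ∧ Matched μ A K (U ∩ C) W ∧ Matched μ A K (U \ C) (V \ W) := by
  obtain ⟨hm, hd⟩ := hUV
  have hUC := hU.inter hC
  have eU : U \ (U ∩ C) = U \ C := sdiff_self_inter
  have mU : μ.real (U \ C) = μ.real U - μ.real (U ∩ C) := by
    rw [← eU, measureReal_sdiff inter_subset_left hUC.isOpen.measurableSet]
  have aU : μ.real (A ∩ (U \ C)) = μ.real (A ∩ U) - μ.real (A ∩ (U ∩ C)) := by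
    rw [← eU, measureReal_inter_sdiff hUC.isOpen.measurableSet inter_subset_left]
  rcases hd with hd | hd
  · obtain ⟨W, hWV, hW, hWm⟩ := hsc (U ∩ C) V hUC hV
      (hm ▸ measureReal_mono inter_subset_left)
    refine ⟨W, hWV, hW, ⟨hWm.symm, Or.inl (hd.mono_right inter_subset_left)⟩, ?_,
      Or.inl (hd.mono_right sdiff_subset)⟩
    rw [mU, measureReal_sdiff hWV hW.isOpen.measurableSet]
    linarith
  rcases (U ∩ C).eq_empty_or_nonempty with h1 | h1
  · refine ⟨∅, empty_subset _, isClopen_empty, ?_, ?_⟩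
    · rw [h1]; exact ⟨rfl, Or.inl (disjoint_empty _)⟩
    · rw [← eU, h1, sdiff_empty, sdiff_empty]; exact ⟨hm, Or.inr hd⟩
  rcases (U \ C).eq_empty_or_nonempty with h2 | h2
  · refine ⟨V, Subset.rfl, hV, ?_, ?_⟩
    · rw [inter_eq_left.2 (sdiff_eq_empty.1 h2)]; exact ⟨hm, Or.inr hd⟩
    · rw [h2, sdiff_self]; exact ⟨rfl, Or.inl (disjoint_empty _)⟩
  have l1 := hlt _ hUC h1
  have l2 := hlt _ (hU.diff hC) h2
  have l3 : μ.real (K ∩ V) ≤ μ.real V := measureReal_mono inter_subset_right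
  have l4 : 0 ≤ μ.real (A ∩ (U ∩ C)) := measureReal_nonneg
  have l5 : 0 ≤ μ.real (A ∩ (U \ C)) := measureReal_nonneg
  obtain ⟨t, t1, t2, t3, t4⟩ := exists_between_weak_strict
    (L := μ.real (K ∩ V) - μ.real (U \ C)) (M := μ.real (U ∩ C))
    (p := μ.real (A ∩ (U ∩ C))) (q := μ.real (K ∩ V) - μ.real (A ∩ (U \ C)))
    (by linarith) (by linarith) (by linarith) (by linarith)
  obtain ⟨W, hWV, hW, hWm, hWt⟩ := hsc.exists_approx hcont hV hK hUC (t := t)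
    (ε := min (t - μ.real (A ∩ (U ∩ C))) (μ.real (K ∩ V) - μ.real (A ∩ (U \ C)) - t))
    (by linarith) (by linarith) (by linarith) (by linarith)
    (lt_min (by linarith) (by linarith))
  obtain ⟨w1, w2⟩ := lt_min_iff.1 hWt
  rw [abs_lt] at w1 w2
  refine ⟨W, hWV, hW, ⟨hWm.symm, Or.inr (by linarith)⟩, ?_, Or.inr ?_⟩
  · rw [mU, measureReal_sdiff hWV hW.isOpen.measurableSet]
    linarith
  · rw [measureReal_inter_sdiff hW.isOpen.measurableSet hWV]
    linarith

/-- A clopen set of prescribed measure inside `U \ A`, by inner regularity. -/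
lemma SubsetCondition.exists_avoiding {μ : Measure X} [IsFiniteMeasure μ]
    (hsc : SubsetCondition μ) {A U C : Set X} (hA : IsClosed A) (hU : IsClopen U)
    (hC : IsClopen C) (h : μ.real C < μ.real U - μ.real (A ∩ U)) :
    ∃ W, W ⊆ U ∧ Disjoint A W ∧ IsClopen W ∧ μ.real W = μ.real C := by
  have hO : IsOpen (U \ A) := hU.isOpen.sdiff hA
  have e := measureReal_inter_add_sdiff (μ := μ) (s := U) hA.measurableSet
  rw [inter_comm] at e
  obtain ⟨Z, hZO, hZ, hZm⟩ := hO.measurableSet.exists_lt_isClosed_of_ne_top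
    (measure_ne_top μ _) (r := μ C)
    ((ENNReal.toReal_lt_toReal (measure_ne_top _ _) (measure_ne_top _ _)).1
      (show μ.real C < μ.real (U \ A) by linarith))
  obtain ⟨D, hD, hZD, hDO⟩ := exists_clopen_of_closed_subset_open hZ hO hZO
  obtain ⟨W, hWD, hW, hWm⟩ := hsc C D hC hD (ENNReal.toReal_mono (measure_ne_top _ _)
    (hZm.le.trans (measure_mono hZD)))
  exact ⟨W, fun x hx => (hDO (hWD hx)).1,
    disjoint_right.2 fun x hx => (hDO (hWD hx)).2, hW, hWm⟩

/-- Refinement on the target side: a clopen cut `C` of `V` is matched by a clopen cut of `U`. -/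
lemma Matched.back {μ : Measure X} [IsFiniteMeasure μ] (hsc : SubsetCondition μ)
    (hcont : ∀ x : X, μ {x} = 0) {A K U V C : Set X} (hA : IsClosed A)
    (hU : IsClopen U) (hV : IsClopen V) (hC : IsClopen C) (hUV : Matched μ A K U V) :
    ∃ W, W ⊆ U ∧ IsClopen W ∧ Matched μ A K W (V ∩ C) ∧ Matched μ A K (U \ W) (V \ C) := by
  obtain ⟨hm, hd⟩ := hUV
  have hVC := hV.inter hC
  have hVC' := hV.diff hC
  have eV : V \ (V ∩ C) = V \ C := sdiff_self_inter
  have mV : μ.real (V \ C) = μ.real V - μ.real (V ∩ C) := by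
    rw [← eV, measureReal_sdiff inter_subset_left hVC.isOpen.measurableSet]
  have kV : μ.real (K ∩ (V \ C)) = μ.real (K ∩ V) - μ.real (K ∩ (V ∩ C)) := by
    rw [← eV, measureReal_inter_sdiff hVC.isOpen.measurableSet inter_subset_left]
  rcases hd with hd | hd
  · obtain ⟨W, hWU, hW, hWm⟩ := hsc (V ∩ C) U hVC hU
      (hm ▸ measureReal_mono inter_subset_left)
    refine ⟨W, hWU, hW, ⟨hWm, Or.inl (hd.mono_right hWU)⟩, ?_,
      Or.inl (hd.mono_right sdiff_subset)⟩
    rw [mV, measureReal_sdiff hWU hW.isOpen.measurableSet]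
    linarith
  have l1 : μ.real (K ∩ (V ∩ C)) ≤ μ.real (V ∩ C) := measureReal_mono inter_subset_right
  have l2 : μ.real (K ∩ (V \ C)) ≤ μ.real (V \ C) := measureReal_mono inter_subset_right
  have l3 : 0 ≤ μ.real (A ∩ U) := measureReal_nonneg
  rcases (measureReal_nonneg (μ := μ) (s := K ∩ (V ∩ C))).eq_or_lt with h1 | h1
  · -- `V ∩ C` has no room for `A`, so its partner has to avoid `A`.
    obtain ⟨W, hWU, hWA, hW, hWm⟩ := hsc.exists_avoiding hA hU hVC (by linarith)
    have hW0 : μ.real (A ∩ W) = 0 := by rw [hWA.inter_eq, measureReal_empty]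
    refine ⟨W, hWU, hW, ⟨hWm, Or.inl hWA⟩, ?_, Or.inr ?_⟩
    · rw [mV, measureReal_sdiff hWU hW.isOpen.measurableSet]
      linarith
    · rw [measureReal_inter_sdiff hW.isOpen.measurableSet hWU]
      linarith
  rcases (measureReal_nonneg (μ := μ) (s := K ∩ (V \ C))).eq_or_lt with h2 | h2
  · obtain ⟨W, hWU, hWA, hW, hWm⟩ := hsc.exists_avoiding hA hU hVC' (by linarith)
    have hW0 : μ.real (A ∩ W) = 0 := by rw [hWA.inter_eq, measureReal_empty]
    refine ⟨U \ W, sdiff_subset, hU.diff hW, ⟨?_, Or.inr ?_⟩, ?_⟩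
    · rw [measureReal_sdiff hWU hW.isOpen.measurableSet]
      linarith
    · rw [measureReal_inter_sdiff hW.isOpen.measurableSet hWU]
      linarith
    · rw [sdiff_sdiff_cancel_left hWU]
      exact ⟨hWm, Or.inl hWA⟩
  have l4 : μ.real (A ∩ U) ≤ μ.real U := measureReal_mono inter_subset_right
  have l5 : 0 ≤ μ.real (V ∩ C) := measureReal_nonneg
  have l6 : 0 ≤ μ.real (V \ C) := measureReal_nonneg
  obtain ⟨t, t1, t2, t3, t4⟩ := exists_between_weak_strict
    (L := max 0 (μ.real (A ∩ U) - μ.real (V \ C))) (M := min (μ.real (A ∩ U)) (μ.real (V ∩ C)))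
    (p := μ.real (A ∩ U) - μ.real (K ∩ (V \ C))) (q := μ.real (K ∩ (V ∩ C)))
    (max_le (le_min (by linarith) (by linarith)) (le_min (by linarith) (by linarith)))
    (max_lt (by linarith) (by linarith)) (lt_min (by linarith) (by linarith)) (by linarith)
  obtain ⟨t1, t1'⟩ := max_le_iff.1 t1
  obtain ⟨t2, t2'⟩ := le_min_iff.1 t2
  obtain ⟨W, hWU, hW, hWm, hWt⟩ := hsc.exists_approx hcont hU hA.measurableSet hVC (t := t)
    (ε := min (t - (μ.real (A ∩ U) - μ.real (K ∩ (V \ C)))) (μ.real (K ∩ (V ∩ C)) - t))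
    (by linarith) (by linarith) (by linarith) (by linarith)
    (lt_min (by linarith) (by linarith))
  obtain ⟨w1, w2⟩ := lt_min_iff.1 hWt
  rw [abs_lt] at w1 w2
  refine ⟨W, hWU, hW, ⟨hWm, Or.inr (by linarith)⟩, ?_, Or.inr ?_⟩
  · rw [mV, measureReal_sdiff hWU hW.isOpen.measurableSet]
    linarith
  · rw [measureReal_inter_sdiff hW.isOpen.measurableSet hWU]
    linarith

/-! ### Matched partitions -/

open scoped Classical in
/-- Code of the partition obtained from the partition coded by `f` by cutting each cell
`f ⁻¹' {c}` along `W c`: codes are doubled, with parity recording the side of the cut. -/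
noncomputable def refineCode (f : X → ℕ) (W : ℕ → Set X) (x : X) : ℕ :=
  2 * f x + if x ∈ W (f x) then 1 else 0

lemma refineCode_div (f : X → ℕ) (W : ℕ → Set X) (x : X) : refineCode f W x / 2 = f x := by
  unfold refineCode; split_ifs <;> omega

lemma refineCode_preimage_odd (f : X → ℕ) (W : ℕ → Set X) (c : ℕ) :
    refineCode f W ⁻¹' {2 * c + 1} = f ⁻¹' {c} ∩ W c := by
  ext x
  simp only [mem_preimage, mem_singleton_iff, mem_inter_iff, refineCode]
  constructor
  · intro h
    split_ifs at h with hx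
    · obtain rfl : f x = c := by omega
      exact ⟨rfl, hx⟩
    · omega
  · rintro ⟨rfl, hx⟩
    rw [if_pos hx]

lemma refineCode_preimage_even (f : X → ℕ) (W : ℕ → Set X) (c : ℕ) :
    refineCode f W ⁻¹' {2 * c} = f ⁻¹' {c} \ W c := by
  ext x
  simp only [mem_preimage, mem_singleton_iff, mem_sdiff, refineCode]
  constructor
  · intro h
    split_ifs at h with hx
    · omega
    · obtain rfl : f x = c := by omega
      exact ⟨rfl, hx⟩
  · rintro ⟨rfl, hx⟩
    rw [if_neg hx, add_zero]

lemma continuous_refineCode {f : X → ℕ} (hf : Continuous f) {W : ℕ → Set X}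
    (hW : ∀ c, IsClopen (W c)) : Continuous (refineCode f W) := by
  have hc : ∀ c, IsClopen (f ⁻¹' {c}) := fun c => (isClopen_discrete _).preimage hf
  refine continuous_discrete_rng.2 fun n => ?_
  obtain ⟨c, rfl | rfl⟩ := Nat.even_or_odd' n
  · rw [refineCode_preimage_even]; exact ((hc c).diff (hW c)).isOpen
  · rw [refineCode_preimage_odd]; exact ((hc c).inter (hW c)).isOpen

lemma refineCode_preimage_setOf_odd (f : X → ℕ) (C : Set X) :
    refineCode f (fun _ => C) ⁻¹' {n | n % 2 = 1} = C := by
  ext x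
  simp only [mem_preimage, mem_ofPred_eq, refineCode]
  split_ifs with h
  · exact iff_of_true (by omega) h
  · exact iff_of_false (by omega) h

/-- A finite stage of the construction: two clopen partitions of `X`, given by continuous
`ℕ`-valued codes, in which the cells carrying the same code are matched. -/
structure MatchedPartitions (μ : Measure X) (A K : Set X) where
  /-- Code of the source partition. -/
  f : X → ℕ
  /-- Code of the target partition. -/
  g : X → ℕ
  continuous_f : Continuous f
  continuous_g : Continuous g
  matched : ∀ c, Matched μ A K (f ⁻¹' {c}) (g ⁻¹' {c})

namespace MatchedPartitions

/-- `t` refines `s`, with the same map of codes on both sides. -/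
def Refines {μ : Measure X} {A K : Set X} (t s : MatchedPartitions μ A K) : Prop :=
  ∃ p : ℕ → ℕ, (∀ x, s.f x = p (t.f x)) ∧ (∀ x, s.g x = p (t.g x))

lemma exists_forth {μ : Measure X} [IsFiniteMeasure μ] (hsc : SubsetCondition μ)
    (hcont : ∀ x : X, μ {x} = 0) {A K C : Set X}
    (hlt : ∀ U, IsClopen U → U.Nonempty → μ.real (A ∩ U) < μ.real U) (hK : MeasurableSet K)
    (hC : IsClopen C) (s : MatchedPartitions μ A K) :
    ∃ t : MatchedPartitions μ A K, t.Refines s ∧ ∃ T, t.f ⁻¹' T = C := by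
  choose W hWV hW h1 h2 using fun c => (s.matched c).forth hsc hcont hlt hK
    ((isClopen_discrete _).preimage s.continuous_f)
    ((isClopen_discrete _).preimage s.continuous_g) hC
  refine ⟨⟨refineCode s.f fun _ => C, refineCode s.g W,
    continuous_refineCode s.continuous_f fun _ => hC, continuous_refineCode s.continuous_g hW,
    fun n => ?_⟩, ⟨fun n => n / 2,
      fun x => (refineCode_div s.f (fun _ => C) x).symm, fun x => (refineCode_div s.g W x).symm⟩, {n | n % 2 = 1}, refineCode_preimage_setOf_odd _ _⟩
  obtain ⟨c, rfl | rfl⟩ := Nat.even_or_odd' n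
  · rw [refineCode_preimage_even, refineCode_preimage_even]; exact h2 c
  · rw [refineCode_preimage_odd, refineCode_preimage_odd, inter_eq_right.2 (hWV c)]; exact h1 c

lemma exists_back {μ : Measure X} [IsFiniteMeasure μ] (hsc : SubsetCondition μ)
    (hcont : ∀ x : X, μ {x} = 0) {A K C : Set X} (hA : IsClosed A)
    (hC : IsClopen C) (s : MatchedPartitions μ A K) :
    ∃ t : MatchedPartitions μ A K, t.Refines s ∧ ∃ T, t.g ⁻¹' T = C := by
  choose W hWU hW h1 h2 using fun c => (s.matched c).back hsc hcont hA
    ((isClopen_discrete _).preimage s.continuous_f)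
    ((isClopen_discrete _).preimage s.continuous_g) hC
  refine ⟨⟨refineCode s.f W, refineCode s.g fun _ => C,
    continuous_refineCode s.continuous_f hW, continuous_refineCode s.continuous_g fun _ => hC,
    fun n => ?_⟩, ⟨fun n => n / 2,
      fun x => (refineCode_div s.f W x).symm, fun x => (refineCode_div s.g (fun _ => C) x).symm⟩, {n | n % 2 = 1}, refineCode_preimage_setOf_odd _ _⟩
  obtain ⟨c, rfl | rfl⟩ := Nat.even_or_odd' n
  · rw [refineCode_preimage_even, refineCode_preimage_even]; exact h2 c
  · rw [refineCode_preimage_odd, refineCode_preimage_odd, inter_eq_right.2 (hWU c)]; exact h1 c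

/-- Back and forth: one refinement step resolving a clopen set on both sides. -/
lemma exists_step {μ : Measure X} [IsFiniteMeasure μ] (hsc : SubsetCondition μ)
    (hcont : ∀ x : X, μ {x} = 0) {A K C : Set X} (hA : IsClosed A)
    (hlt : ∀ U, IsClopen U → U.Nonempty → μ.real (A ∩ U) < μ.real U) (hK : MeasurableSet K)
    (hC : IsClopen C) (s : MatchedPartitions μ A K) :
    ∃ t : MatchedPartitions μ A K, t.Refines s ∧ (∃ T, t.f ⁻¹' T = C) ∧ ∃ T, t.g ⁻¹' T = C := by
  obtain ⟨r, ⟨p, hpf, hpg⟩, T, hT⟩ := exists_forth hsc hcont hlt hK hC s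
  obtain ⟨t, ⟨q, hqf, hqg⟩, T', hT'⟩ := exists_back hsc hcont hA hC r
  refine ⟨t, ⟨p ∘ q, fun x => by simp [hpf, hqf], fun x => by simp [hpg, hqg]⟩,
    ⟨q ⁻¹' T, ?_⟩, T', hT'⟩
  rw [← hT]
  ext x
  simp [hqf]

lemma measure_preimage_eq {μ : Measure X} [IsFiniteMeasure μ] {A K : Set X}
    (s : MatchedPartitions μ A K) (T : Set ℕ) : μ (s.f ⁻¹' T) = μ (s.g ⁻¹' T) := by
  have hf := s.continuous_f.measurable
  have hg := s.continuous_g.measurable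
  have : μ.map s.f = μ.map s.g := by
    refine Measure.ext_of_singleton fun c => ?_
    rw [Measure.map_apply hf (measurableSet_singleton c),
      Measure.map_apply hg (measurableSet_singleton c)]
    exact (ENNReal.toReal_eq_toReal_iff' (measure_ne_top _ _) (measure_ne_top _ _)).1
      (s.matched c).1
  rw [← Measure.map_apply hf (MeasurableSet.of_discrete), this,
    Measure.map_apply hg (MeasurableSet.of_discrete)]

end MatchedPartitions

/-! ### The limit homeomorphism -/

/-- Every branch of the tree of cells of `f` is followed by a point in the tree of cells of `g`. -/
lemma exists_branch {f g : ℕ → X → ℕ} (hg : ∀ n, Continuous (g n)) (p : ℕ → ℕ → ℕ)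
    (hpf : ∀ n x, f n x = p n (f (n + 1) x)) (hpg : ∀ n x, g n x = p n (g (n + 1) x))
    (hne : ∀ n x, ∃ y, g n y = f n x) (x : X) : ∃ y, ∀ n, g n y = f n x := by
  obtain ⟨y, hy⟩ := IsCompact.nonempty_iInter_of_sequence_nonempty_isCompact_isClosed
    (fun n => g n ⁻¹' {f n x})
    (fun n y hy => by
      have hy' : g (n + 1) y = f (n + 1) x := hy
      change g n y = f n x
      rw [hpg, hy', ← hpf])
    (fun n => hne n x) ((isClosed_discrete _).preimage (hg 0)).isCompact
    (fun n => (isClosed_discrete _).preimage (hg n))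
  exact ⟨y, fun n => mem_iInter.1 hy n⟩

lemma exists_clopen_mem_notMem_closed {F : Set X} (hF : IsClosed F) {y : X} (hy : y ∉ F) :
    ∃ C, IsClopen C ∧ y ∈ C ∧ Disjoint F C := by
  obtain ⟨C, hC, hyC, hCF⟩ := compact_exists_isClopen_in_isOpen hF.isOpen_compl hy
  exact ⟨C, hC, hyC, disjoint_right.2 fun z hz => hCF hz⟩

/-- The limit of the back-and-forth construction. -/
lemma exists_homeomorph_image_subset {μ : Measure X} [IsFiniteMeasure μ]
    (hsc : SubsetCondition μ) (hcont : ∀ x : X, μ {x} = 0)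
    (hpos : ∀ U : Set X, IsOpen U → U.Nonempty → 0 < μ U) {A K : Set X} (hA : IsClosed A)
    (hlt : ∀ U, IsClopen U → U.Nonempty → μ.real (A ∩ U) < μ.real U) (hK : IsClosed K)
    (hAK : μ.real A < μ.real K) :
    ∃ h : X ≃ₜ X, (∀ S : Set X, MeasurableSet S → μ (h '' S) = μ S) ∧ h '' A ⊆ K := by
  have : SecondCountableTopology X := by
    let _ := TopologicalSpace.metrizableSpaceMetric X
    infer_instance
  have : Countable (TopologicalSpace.Clopens X) :=
    TopologicalSpace.Clopens.countable_iff_secondCountable.2 this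
  obtain ⟨e, he⟩ := exists_surjective_nat (TopologicalSpace.Clopens X)
  let s₀ : MatchedPartitions μ A K := ⟨fun _ => 0, fun _ => 0, continuous_const, continuous_const,
    fun c => by
      by_cases hc : 0 = c
      · rw [preimage_const_of_mem (by simpa using hc)]
        exact ⟨rfl, Or.inr (by simpa using hAK)⟩
      · rw [preimage_const_of_notMem (by simpa using hc)]
        exact ⟨rfl, Or.inl (disjoint_empty _)⟩⟩
  choose step hstep hstepf hstepg using fun n (s : MatchedPartitions μ A K) =>
    s.exists_step hsc hcont hA hlt hK.measurableSet (e n).isClopen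
  let s : ℕ → MatchedPartitions μ A K := fun n => Nat.rec s₀ step n
  have hs : ∀ n, s (n + 1) = step n (s n) := fun n => rfl
  have hf : ∀ C : Set X, IsClopen C → ∃ n T, (s n).f ⁻¹' T = C := by
    intro C hC
    obtain ⟨n, hn⟩ := he ⟨C, hC⟩
    obtain ⟨T, hT⟩ := hstepf n (s n)
    exact ⟨n + 1, T, by rw [hs, hT, hn]; rfl⟩
  have hg : ∀ C : Set X, IsClopen C → ∃ n T, (s n).g ⁻¹' T = C := by
    intro C hC
    obtain ⟨n, hn⟩ := he ⟨C, hC⟩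
    obtain ⟨T, hT⟩ := hstepg n (s n)
    exact ⟨n + 1, T, by rw [hs, hT, hn]; rfl⟩
  choose p hpf hpg using fun n => (hstep n (s n))
  -- Corresponding cells have the same measure, so they are simultaneously nonempty.
  have hfg : ∀ n x, ∃ y, (s n).g y = (s n).f x := by
    intro n x
    have h := hpos _ ((isOpen_discrete {(s n).f x}).preimage (s n).continuous_f) ⟨x, rfl⟩
    rw [(s n).measure_preimage_eq] at h
    exact nonempty_of_measure_ne_zero h.ne'
  have hgf : ∀ n x, ∃ y, (s n).f y = (s n).g x := by
    intro n x
    have h := hpos _ ((isOpen_discrete {(s n).g x}).preimage (s n).continuous_g) ⟨x, rfl⟩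
    rw [← (s n).measure_preimage_eq] at h
    exact nonempty_of_measure_ne_zero h.ne'
  choose φ hφ using exists_branch (f := fun n => (s n).f) (g := fun n => (s n).g)
    (fun n => (s n).continuous_g) p hpf hpg hfg
  choose ψ hψ using exists_branch (f := fun n => (s n).g) (g := fun n => (s n).f)
    (fun n => (s n).continuous_f) p hpg hpf hgf
  have hsepf : ∀ x y, (∀ n, (s n).f x = (s n).f y) → x = y := by
    intro x y hxy
    by_contra hne
    obtain ⟨C, hC, hxC, hyC⟩ := exists_clopen_mem_notMem_closed (isClosed_singleton (x := y))
      (y := x) hne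
    obtain ⟨n, T, rfl⟩ := hf C hC
    rw [mem_preimage, hxy] at hxC
    exact disjoint_left.1 hyC rfl hxC
  have hsepg : ∀ x y, (∀ n, (s n).g x = (s n).g y) → x = y := by
    intro x y hxy
    by_contra hne
    obtain ⟨C, hC, hxC, hyC⟩ := exists_clopen_mem_notMem_closed (isClosed_singleton (x := y))
      (y := x) hne
    obtain ⟨n, T, rfl⟩ := hg C hC
    rw [mem_preimage, hxy] at hxC
    exact disjoint_left.1 hyC rfl hxC
  let φe : X ≃ X := ⟨φ, ψ, fun x => hsepf _ _ fun n => by rw [hψ, hφ],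
    fun x => hsepg _ _ fun n => by rw [hφ, hψ]⟩
  have hpre : ∀ n T, φ ⁻¹' ((s n).g ⁻¹' T) = (s n).f ⁻¹' T := by
    intro n T
    ext x
    simp only [mem_preimage, hφ]
  have hφc : Continuous φe := by
    refine isTopologicalBasis_isClopen.continuous_iff.2 fun C hC => ?_
    obtain ⟨n, T, rfl⟩ := hg C hC
    change IsOpen (φ ⁻¹' _)
    rw [hpre]
    exact (isOpen_discrete T).preimage (s n).continuous_f
  have hφm : μ.map φ = μ := by
    have hm : Measurable φ := hφc.measurable
    refine ext_of_generate_finite _ (BorelSpace.measurable_eq.trans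
      isTopologicalBasis_isClopen.borel_eq_generateFrom)
      (fun U hU V hV _ => IsClopen.inter hU hV) ?_ ?_
    · intro C hC
      obtain ⟨n, T, rfl⟩ := hg C hC
      rw [Measure.map_apply hm (IsClopen.isOpen hC).measurableSet, hpre,
        (s n).measure_preimage_eq]
    · rw [Measure.map_apply hm MeasurableSet.univ, preimage_univ]
  refine ⟨hφc.homeoOfEquivCompactToT2, ?_, ?_⟩
  · intro S hS
    have hS' : MeasurableSet (hφc.homeoOfEquivCompactToT2 '' S) :=
      (Homeomorph.measurableEmbedding _).measurableSet_image.2 hS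
    conv_lhs => rw [← hφm]
    refine (Measure.map_apply hφc.measurable hS').trans ?_
    congr 1
    exact preimage_image_eq S φe.injective
  · rintro _ ⟨x, hx, rfl⟩
    change φ x ∈ K
    by_contra hxK
    obtain ⟨C, hC, hxC, hKC⟩ := exists_clopen_mem_notMem_closed hK hxK
    obtain ⟨n, T, rfl⟩ := hg C hC
    rcases ((s n).matched ((s n).f x)).2 with h | h
    · exact disjoint_left.1 h hx rfl
    · have h0 : K ∩ (s n).g ⁻¹' {(s n).f x} = ∅ := by
        refine (hKC.mono_right (preimage_mono (singleton_subset_iff.2 ?_))).inter_eq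
        rw [← hφ]
        exact hxC
      rw [h0, measureReal_empty] at h
      exact absurd h measureReal_nonneg.not_gt

end Good

/-- A closed nowhere dense set can be moved into any Borel set of bigger measure
by a measure-preserving homeomorphism. -/
theorem stmt4 {X : Type*} [TopologicalSpace X] [CompactSpace X] [T2Space X]
    [TopologicalSpace.MetrizableSpace X] [TotallyDisconnectedSpace X]
    [MeasurableSpace X] [BorelSpace X]
    (μ : MeasureTheory.Measure X) [MeasureTheory.IsFiniteMeasure μ]
    (hperf : ∀ x : X, ¬ IsOpen ({x} : Set X))
    (hcont : ∀ x : X, μ {x} = 0)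
    (hpos : ∀ U : Set X, IsOpen U → U.Nonempty → 0 < μ U)
    (hsc : ∀ U V : Set X, IsClopen U → IsClopen V → μ U < μ V →
      ∃ W, W ⊆ V ∧ IsClopen W ∧ μ W = μ U)
    (A : Set X) (hA : IsClosed A) (hAnd : IsNowhereDense A)
    (B : Set X) (hB : MeasurableSet B) (hAB : μ A < μ B) :
    ∃ h : X ≃ₜ X, (∀ S : Set X, MeasurableSet S → μ (h '' S) = μ S) ∧
      h '' A ⊆ B := by
  have hsc' : SubsetCondition μ := by
    intro U V hU hV hUV
    rcases hUV.eq_or_lt with h | h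
    · exact ⟨V, Subset.rfl, hV, h.symm⟩
    · obtain ⟨W, h1, h2, h3⟩ := hsc U V hU hV
        ((ENNReal.toReal_lt_toReal (measure_ne_top _ _) (measure_ne_top _ _)).1 h)
      exact ⟨W, h1, h2, by rw [Measure.real, h3, Measure.real]⟩
  have hlt : ∀ U, IsClopen U → U.Nonempty → μ.real (A ∩ U) < μ.real U := by
    intro U hU hUne
    -- `U \ A` is open and nonempty, so it has positive measure.
    have hne : (U \ A).Nonempty := by
      rw [sdiff_nonempty]
      intro hUA
      have h1 : U ⊆ interior A := interior_maximal hUA hU.isOpen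
      rw [hA.isNowhereDense_iff.1 hAnd] at h1
      exact hUne.ne_empty (subset_empty_iff.1 h1)
    have h2 : 0 < μ.real (U \ A) :=
      ENNReal.toReal_pos (hpos _ (hU.isOpen.sdiff hA) hne).ne' (measure_ne_top _ _)
    have h3 := measureReal_inter_add_sdiff (μ := μ) (s := U) hA.measurableSet
    rw [inter_comm] at h3
    linarith
  obtain ⟨K, hKB, hK, hAK⟩ := hB.exists_lt_isClosed_of_ne_top (measure_ne_top μ _) hAB
  obtain ⟨h, h1, h2⟩ := exists_homeomorph_image_subset hsc' hcont hpos hA hlt hK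
    ((ENNReal.toReal_lt_toReal (measure_ne_top _ _) (measure_ne_top _ _)).2 hAK)
  exact ⟨h, h1, h2.trans hKB⟩
end
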